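/- For every constant C > 0 there exists ε₀ > 0 such that for all 0 < ε < ε₀ and every angular velocity Ω with 6|log ε| + 3 < Ω ≤ C/ε, no GP minimizer of E^GP_{ε,Ω} is an eigenfunction of the angular momentum; that is, there is no normalized minimizer Ψ and integer n with LΨ = nΨ (equivalently, no minimizer of the form Ψ(r,θ) = ξ(r)e^{inθ}). In particular rotational symmetry is spontaneously broken in the ground state in this regime. -/

import Mathlib

open MeasureTheory Real Filter

noncomputable section

/-- Points of the plane. -/
abbrev Pt : Type := EuclideanSpace ℝ (Fin 2)

/-- The open unit disc. -/
def B1 : Set Pt := Metric.ball 0 1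

/-- First partial derivative of a complex-valued function. -/
def pd1 (Ψ : Pt → ℂ) (x : Pt) : ℂ := fderiv ℝ Ψ x (EuclideanSpace.single 0 1)

/-- Second partial derivative of a complex-valued function. -/
def pd2 (Ψ : Pt → ℂ) (x : Pt) : ℂ := fderiv ℝ Ψ x (EuclideanSpace.single 1 1)

/-- Angular momentum operator `L = -i (x₁ ∂₂ - x₂ ∂₁)`. -/
def angMom (Ψ : Pt → ℂ) (x : Pt) : ℂ :=
  -Complex.I * ((x 0 : ℂ) * pd2 Ψ x - (x 1 : ℂ) * pd1 Ψ x)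

/-- The Gross-Pitaevskii energy density `|∇Ψ|² - Ω conj(Ψ) LΨ + |Ψ|⁴/ε²`. -/
def gpDensity (ε Ω : ℝ) (Ψ : Pt → ℂ) (x : Pt) : ℝ :=
  ‖pd1 Ψ x‖ ^ 2 + ‖pd2 Ψ x‖ ^ 2
    - Ω * (starRingEnd ℂ (Ψ x) * angMom Ψ x).re
    + ‖Ψ x‖ ^ 4 / ε ^ 2

/-- The Gross-Pitaevskii functional on the unit disc. -/
def gpEnergy (ε Ω : ℝ) (Ψ : Pt → ℂ) : ℝ := ∫ x in B1, gpDensity ε Ω Ψ x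

/-- Admissible (H¹, normalized) wave functions. -/
def gpAdm (Ψ : Pt → ℂ) : Prop :=
  DifferentiableOn ℝ Ψ B1 ∧
  IntegrableOn (fun x => ‖Ψ x‖ ^ 2) B1 ∧
  IntegrableOn (fun x => ‖pd1 Ψ x‖ ^ 2 + ‖pd2 Ψ x‖ ^ 2) B1 ∧
  IntegrableOn (fun x => ‖Ψ x‖ ^ 4) B1 ∧
  IntegrableOn (fun x => (starRingEnd ℂ (Ψ x) * angMom Ψ x).re) B1 ∧
  (∫ x in B1, ‖Ψ x‖ ^ 2) = 1

/-- The GP ground-state energy: infimum of the functional over normalized functions. -/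
def gpGround (ε Ω : ℝ) : ℝ := sInf {E | ∃ Ψ : Pt → ℂ, gpAdm Ψ ∧ E = gpEnergy ε Ω Ψ}

/-- A GP minimizer: a normalized admissible function attaining the infimum. -/
def IsGPMinimizer (ε Ω : ℝ) (Ψ : Pt → ℂ) : Prop :=
  gpAdm Ψ ∧ gpEnergy ε Ω Ψ = gpGround ε Ω

/-- The Thomas-Fermi functional. -/
def tfEnergy (Ω₀ : ℝ) (ρ : Pt → ℝ) : ℝ :=
  ∫ x in B1, ((ρ x) ^ 2 - Ω₀ ^ 2 * ‖x‖ ^ 2 * ρ x / 4)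

/-- Admissible TF densities: nonnegative, in L²(B₁), of total mass one. -/
def tfAdm (ρ : Pt → ℝ) : Prop :=
  IntegrableOn ρ B1 ∧ IntegrableOn (fun x => (ρ x) ^ 2) B1 ∧
  (∀ᵐ x ∂(volume.restrict B1), 0 ≤ ρ x) ∧ (∫ x in B1, ρ x) = 1

/-- The TF ground-state energy. -/
def tfGround (Ω₀ : ℝ) : ℝ := sInf {E | ∃ ρ : Pt → ℝ, tfAdm ρ ∧ E = tfEnergy Ω₀ ρ}

/-- Radius of the TF "hole". -/
def R0 (Ω₀ : ℝ) : ℝ := Real.sqrt (1 - 4 / (Real.sqrt π * Ω₀))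

/-- The TF minimizer. -/
def rhoTF (Ω₀ : ℝ) (x : Pt) : ℝ :=
  if Ω₀ ≤ 4 / Real.sqrt π then 1 / π - Ω₀ ^ 2 / 16 * (1 - 2 * ‖x‖ ^ 2)
  else max 0 (Ω₀ ^ 2 / 8 * (‖x‖ ^ 2 - 1) + Ω₀ / (2 * Real.sqrt π))

/-!
Suppose that a minimizer `Ψ` satisfies `LΨ = nΨ`, and put `m = ∫ |x|² |Ψ|²` and
`g = ∫ |Ψ|² / |x|²`. Two trial states are compared with `Ψ`, up to a cost of order `|log ε|`.

* Insert a vortex at a random point of a disc slightly larger than `B₁`. By Newton's theorem the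
  velocity field of the vortex averages to a rigid rotation, so the mean energy can be computed,
  and minimality forces `Ωm - cost ≤ 2 n`. In particular `n ≥ 2`.
* First remove one unit of winding from `Ψ` by multiplying with `x̄ / |x|`, then insert a vortex as
  before. The two steps change the angular momentum in opposite directions, which leads to
  `(Ωm - cost) g ≤ Ω`.

The second inequality is violated. When `Ωε` is small, `|Ψ|²` is close to uniform, so that `m` is
close to `1 / 2` while `g` is large. When `Ωε` is bounded below, a bound on `∫ |Ψ|⁴` keeps the
variance `V` of `|x|²` away from zero, and `m g ≥ 1 + V`.
-/

/-! ### Newton's theorem in the plane -/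

lemma circleAverage_const_sub_inv_of_lt_norm {x : ℂ} {r : ℝ} (hr : 0 ≤ r) (hx : r < ‖x‖) :
    circleAverage (fun z ↦ (x - z)⁻¹) 0 r = x⁻¹ := by
  have hd : DifferentiableOn ℂ (fun z ↦ (x - z)⁻¹) (closure (Metric.ball 0 |r|)) := fun z hz ↦ by
    have hz : ‖z‖ ≤ r := by
      simpa [abs_of_nonneg hr] using Metric.closure_ball_subset_closedBall hz
    exact ((by fun_prop : DifferentiableAt ℂ (fun z ↦ x - z) z).inv
      (sub_ne_zero.2 fun h ↦ (h ▸ hz).not_gt hx)).differentiableWithinAt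
  simpa using hd.diffContOnCl.circleAverage

lemma circleAverage_const_sub_inv_of_norm_lt {x : ℂ} {r : ℝ} (hx : ‖x‖ < r) :
    circleAverage (fun z ↦ (x - z)⁻¹) 0 r = 0 := by
  have hr : 0 < r := (norm_nonneg x).trans_lt hx
  rcases eq_or_ne x 0 with rfl | hx0
  · have h : ∀ z : ℂ, (z - 0)⁻¹ • (0 - z)⁻¹ = (-1) * (z - 0) ^ (-2 : ℤ) := fun z ↦ by
      rw [zpow_neg, ← neg_sub z 0, inv_neg, smul_eq_mul, mul_neg, ← mul_inv, ← sq, neg_one_mul]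
      rfl
    rw [circleAverage_eq_circleIntegral hr.ne']
    simp only [h]
    rw [circleIntegral.integral_const_mul,
      circleIntegral.integral_sub_zpow_of_ne (by norm_num), mul_zero, smul_zero]
  · have hne : ∀ z ∈ Metric.sphere (0 : ℂ) |r|, x - z ≠ 0 := fun z hz h ↦ by
      rw [mem_sphere_zero_iff_norm, ← sub_eq_zero.1 h, abs_of_pos hr] at hz
      exact hx.ne hz
    have hcauchy : circleAverage (fun z ↦ z / (z - x)) 0 r = 1 := by
      simpa using (diffContOnCl_const (c := (1 : ℂ))).circleAverage_smul_div
        (c := 0) (R := r) (w := x) (by simpa [abs_of_pos hr] using hx)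
    have hint : CircleIntegrable (fun z ↦ z / (z - x)) 0 r := by
      refine ContinuousOn.circleIntegrable' (continuousOn_id.div (by fun_prop) fun z hz ↦ ?_)
      rw [← neg_sub]
      exact neg_ne_zero.2 (hne z hz)
    calc circleAverage (fun z ↦ (x - z)⁻¹) 0 r
        = circleAverage (fun z ↦ x⁻¹ • (1 - z / (z - x))) 0 r :=
          circleAverage_congr_sphere fun z hz ↦ by
            have := hne z hz
            have : z - x ≠ 0 := by rw [← neg_sub]; exact neg_ne_zero.2 this
            simp only [smul_eq_mul]
            field_simp
            ring
      _ = 0 := by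
          rw [circleAverage_fun_smul, circleAverage_fun_sub (circleIntegrable_const _ _ _) hint,
            hcauchy, circleAverage_const, sub_self, smul_zero]

lemma integrableOn_smul_comp_polarCoord_symm {E : Type*} [NormedAddCommGroup E] [NormedSpace ℝ E]
    {f : ℂ → E} (hf : Integrable f) :
    IntegrableOn (fun p : ℝ × ℝ ↦ p.1 • f (Complex.polarCoord.symm p)) polarCoord.target := by
  have hg : Integrable (f ∘ Complex.measurableEquivRealProd.symm) :=
    Complex.volume_preserving_equiv_real_prod.symm.integrable_comp_of_integrable hf
  have h := (integrableOn_image_iff_integrableOn_abs_det_fderiv_smul volume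
    polarCoord.open_target.measurableSet
    (fun p _ ↦ (hasFDerivAt_polarCoord_symm p).hasFDerivWithinAt) polarCoord.symm.injOn _).1
    hg.integrableOn
  refine h.congr_fun (fun p hp ↦ ?_) polarCoord.open_target.measurableSet
  simp only [det_fderivPolarCoordSymm, abs_of_pos (show 0 < p.1 from hp.1)]
  rfl

lemma setIntegral_comp_polarCoord_symm {E : Type*} [NormedAddCommGroup E] [NormedSpace ℝ E]
    (f : ℂ → E) (r : ℝ) :
    ∫ θ in Set.Ioo (-π) π, f (Complex.polarCoord.symm (r, θ)) = (2 * π) • circleAverage f 0 r := by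
  have hθ : ∀ θ : ℝ, Complex.polarCoord.symm (r, θ) = circleMap 0 r θ := fun θ ↦ by
    simp [circleMap, Complex.exp_mul_I]
  rw [circleAverage_eq_integral_add (-π), smul_smul, mul_inv_cancel₀ (by positivity), one_smul,
    intervalIntegral.integral_comp_add_right (fun θ ↦ f (circleMap 0 r θ)), zero_add,
    show 2 * π + -π = π by ring, intervalIntegral.integral_of_le (by linarith [pi_pos]),
    integral_Ioc_eq_integral_Ioo]
  simp only [hθ]

lemma integral_eq_integral_circleAverage {E : Type*} [NormedAddCommGroup E] [NormedSpace ℝ E]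
    {f : ℂ → E} (hf : Integrable f) :
    ∫ z, f z = ∫ r in Set.Ioi (0 : ℝ), (2 * π * r) • circleAverage f 0 r := by
  have hi := integrableOn_smul_comp_polarCoord_symm hf
  rw [← Complex.integral_comp_polarCoord_symm, polarCoord_target, Measure.volume_eq_prod]
  rw [polarCoord_target, Measure.volume_eq_prod] at hi
  rw [setIntegral_prod _ hi]
  refine setIntegral_congr_fun measurableSet_Ioi fun r _ ↦ ?_
  simp only [integral_smul, setIntegral_comp_polarCoord_symm, smul_smul, mul_comm]

lemma integrableOn_const_sub_inv_ball (x : ℂ) (R : ℝ) :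
    IntegrableOn (fun p : ℂ ↦ (x - p)⁻¹) (Metric.ball 0 R) := by
  have hloc : LocallyIntegrable (fun p : ℂ ↦ p⁻¹) := by
    refine locallyIntegrable_of_norm_le_rpow (C := 1) (α := 1) (by simp) (by simp)
      (ae_of_all _ fun p ↦ ?_) (by fun_prop)
    rw [norm_inv, rpow_neg_one, one_mul]
  have h := hloc.integrableOn_isCompact (isCompact_closedBall x R)
  rw [← (Measure.measurePreserving_sub_left volume x).integrableOn_comp_preimage
    (MeasurableEquiv.subLeft x).measurableEmbedding] at h
  refine h.mono_set fun p hp ↦ ?_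
  simpa using (mem_ball_zero_iff.1 hp).le

lemma integral_ball_const_sub_inv {x : ℂ} {R : ℝ} (hx : ‖x‖ < R) :
    ∫ p in Metric.ball (0 : ℂ) R, (x - p)⁻¹ = π * (starRingEnd ℂ) x := by
  set F : ℂ → ℂ := (Metric.ball 0 R).indicator fun p ↦ (x - p)⁻¹
  have hF : Integrable F :=
    (integrable_indicator_iff measurableSet_ball).2 (integrableOn_const_sub_inv_ball x R)
  have hring : ∀ r ∈ Set.Ioi (0 : ℝ), r ≠ ‖x‖ →
      (2 * π * r) • circleAverage F 0 r
        = (Set.Ioo 0 ‖x‖).indicator (fun r ↦ (2 * π * r) • x⁻¹) r := by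
    intro r hr hrx
    have hr : 0 < r := hr
    have hcongr : r < R → circleAverage F 0 r = circleAverage (fun z ↦ (x - z)⁻¹) 0 r := fun hrR ↦
      circleAverage_congr_sphere fun z hz ↦ Set.indicator_of_mem
        (by simpa [mem_sphere_zero_iff_norm.1 hz, abs_of_pos hr] using hrR) _
    rcases hrx.lt_or_gt with h | h
    · rw [hcongr (h.trans hx), circleAverage_const_sub_inv_of_lt_norm hr.le h,
        Set.indicator_of_mem (Set.mem_Ioo.2 ⟨hr, h⟩)]
    · rw [Set.indicator_of_notMem fun hm ↦ h.not_gt hm.2, smul_eq_zero]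
      right
      rcases lt_or_ge r R with hrR | hrR
      · rw [hcongr hrR, circleAverage_const_sub_inv_of_norm_lt h]
      · rw [circleAverage_congr_sphere (f₂ := fun _ ↦ (0 : ℂ)), circleAverage_const]
        exact fun z hz ↦ Set.indicator_of_notMem
          (by simpa [mem_sphere_zero_iff_norm.1 hz, abs_of_pos hr] using hrR) _
  have hae : ∀ᵐ r : ℝ, r ≠ ‖x‖ := by simp [ae_iff]
  calc ∫ p in Metric.ball (0 : ℂ) R, (x - p)⁻¹
      = ∫ r in Set.Ioi (0 : ℝ), (Set.Ioo 0 ‖x‖).indicator (fun r ↦ (2 * π * r) • x⁻¹) r := by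
        rw [← integral_indicator measurableSet_ball, integral_eq_integral_circleAverage hF]
        exact setIntegral_congr_ae measurableSet_Ioi (hae.mono fun r hne hr ↦ hring r hr hne)
    _ = ∫ r in (0 : ℝ)..‖x‖, (2 * π * r) • x⁻¹ := by
        rw [setIntegral_indicator measurableSet_Ioo, Set.inter_eq_right.2 Set.Ioo_subset_Ioi_self,
          ← integral_Ioc_eq_integral_Ioo, intervalIntegral.integral_of_le (norm_nonneg _)]
    _ = (π * ‖x‖ ^ 2) • x⁻¹ := by
        rw [intervalIntegral.integral_smul_const, intervalIntegral.integral_const_mul, integral_id]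
        ring_nf
    _ = π * (starRingEnd ℂ) x := by
        rw [Complex.inv_def, Complex.normSq_eq_norm_sq, Complex.real_smul]
        rcases eq_or_ne x 0 with rfl | hx0
        · simp
        · have : (‖x‖ : ℂ) ≠ 0 := by exact_mod_cast norm_ne_zero_iff.2 hx0
          push_cast
          field_simp

/-- The identification of the plane with `ℂ`, `x ↦ x₁ + i x₂`. -/
def toC : Pt ≃ₗᵢ[ℝ] ℂ := Complex.orthonormalBasisOneI.repr.symm

lemma toC_apply (x : Pt) : toC x = x 0 + x 1 * Complex.I :=
  Complex.orthonormalBasisOneI_repr_symm_apply x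

lemma measurePreserving_toC : MeasurePreserving toC :=
  Complex.orthonormalBasisOneI.measurePreserving_repr_symm

lemma measurableEmbedding_toC : MeasurableEmbedding toC :=
  toC.toHomeomorph.measurableEmbedding

lemma conj_trans_toC_symm_inv (y : Pt) :
    Complex.conjLIE.trans toC.symm (toC y)⁻¹ = (‖y‖ ^ 2)⁻¹ • y := by
  rw [LinearIsometryEquiv.trans_apply, LinearIsometryEquiv.symm_apply_eq, map_smul,
    Complex.conjLIE_apply, Complex.inv_def, Complex.normSq_eq_norm_sq,
    LinearIsometryEquiv.norm_map, map_mul, Complex.conj_conj, Complex.conj_ofReal,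
    Complex.real_smul, mul_comm]

lemma integrableOn_norm_sq_inv_smul_const_sub (x : Pt) (R : ℝ) :
    IntegrableOn (fun p : Pt ↦ (‖x - p‖ ^ 2)⁻¹ • (x - p)) (Metric.ball 0 R) := by
  have h := integrableOn_const_sub_inv_ball (toC x) R
  rw [← measurePreserving_toC.integrableOn_comp_preimage measurableEmbedding_toC,
    toC.preimage_ball, map_zero] at h
  have h := (Complex.conjLIE.trans toC.symm).integrable_comp_iff.2 h
  simpa only [IntegrableOn, Function.comp_apply, ← map_sub, conj_trans_toC_symm_inv] using h

lemma integral_ball_norm_sq_inv_smul_const_sub {x : Pt} {R : ℝ} (hx : ‖x‖ < R) :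
    ∫ p in Metric.ball (0 : Pt) R, (‖x - p‖ ^ 2)⁻¹ • (x - p) = π • x := by
  have h := integral_ball_const_sub_inv (x := toC x) (by rwa [toC.norm_map])
  rw [← measurePreserving_toC.setIntegral_preimage_emb measurableEmbedding_toC,
    toC.preimage_ball, map_zero] at h
  have h := congrArg (Complex.conjLIE.trans toC.symm).toContinuousLinearEquiv h
  rw [← ContinuousLinearEquiv.integral_comp_comm] at h
  simp only [LinearIsometryEquiv.coe_toContinuousLinearEquiv, ← map_sub,
    conj_trans_toC_symm_inv] at h
  rw [h, LinearIsometryEquiv.trans_apply, ← Complex.real_smul, map_smul, map_smul,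
    Complex.conjLIE_apply, Complex.conj_conj, toC.symm_apply_apply]

/-! ### Currents and the kinetic energy density -/

/-- Multiplication by a complex number in the plane: scaling and rotation. -/
def complexMul (c : ℂ) : Pt →L[ℝ] Pt :=
  toC.symm.toContinuousLinearEquiv.toContinuousLinearMap ∘L
    (ContinuousLinearMap.mul ℝ ℂ c ∘L toC.toContinuousLinearEquiv.toContinuousLinearMap)

lemma toC_complexMul (c : ℂ) (x : Pt) : toC (complexMul c x) = c * toC x :=
  toC.apply_symm_apply _

/-- The rotation by a right angle. -/
def perp : Pt →L[ℝ] Pt := complexMul Complex.I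

lemma toC_perp (x : Pt) : toC (perp x) = Complex.I * toC x := toC_complexMul _ x

lemma perp_apply_zero (x : Pt) : perp x 0 = -x 1 := by
  simpa [toC_apply] using congrArg Complex.re (toC_perp x)

lemma perp_apply_one (x : Pt) : perp x 1 = x 0 := by
  simpa [toC_apply] using congrArg Complex.im (toC_perp x)

lemma norm_sq_eq_sum (x : Pt) : ‖x‖ ^ 2 = ∑ i, x i ^ 2 := by
  simp [EuclideanSpace.norm_sq_eq]

lemma sum_perp_sq (x : Pt) : ∑ i, perp x i ^ 2 = ‖x‖ ^ 2 := by
  simp only [norm_sq_eq_sum, Fin.sum_univ_two, perp_apply_zero, perp_apply_one]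
  ring

/-- The `i`-th partial derivative; `pd1` and `pd2` are `pd 0` and `pd 1`. -/
def pd (i : Fin 2) (Ψ : Pt → ℂ) (x : Pt) : ℂ := fderiv ℝ Ψ x (EuclideanSpace.single i 1)

/-- The complex current `conj Ψ ∂ᵢΨ`: its real part is `∂ᵢ|Ψ|² / 2`, its imaginary part the
usual probability current. -/
def conjGrad (i : Fin 2) (Ψ : Pt → ℂ) (x : Pt) : ℂ := starRingEnd ℂ (Ψ x) * pd i Ψ x

/-- The squared gradient `|∇Ψ|²`. -/
def gradSq (Ψ : Pt → ℂ) (x : Pt) : ℝ := ∑ i, ‖pd i Ψ x‖ ^ 2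

/-- The density `conj(Ψ) LΨ` of angular momentum, up to its imaginary part. -/
def angDensity (Ψ : Pt → ℂ) (x : Pt) : ℝ := (starRingEnd ℂ (Ψ x) * angMom Ψ x).re

/-- The quadratic part `|∇Ψ|² - Ω conj(Ψ) LΨ` of the Gross–Pitaevskii energy density. -/
def kinDensity (Ω : ℝ) (Ψ : Pt → ℂ) (x : Pt) : ℝ := gradSq Ψ x - Ω * angDensity Ψ x

section

variable {v Ψ : Pt → ℂ} {x : Pt}

lemma pd1_sq_add_pd2_sq (Ψ : Pt → ℂ) (x : Pt) : ‖pd1 Ψ x‖ ^ 2 + ‖pd2 Ψ x‖ ^ 2 = gradSq Ψ x :=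
  (Fin.sum_univ_two fun i ↦ ‖pd i Ψ x‖ ^ 2).symm

lemma gpDensity_eq_kinDensity_add (ε Ω : ℝ) (Ψ : Pt → ℂ) (x : Pt) :
    gpDensity ε Ω Ψ x = kinDensity Ω Ψ x + ‖Ψ x‖ ^ 4 / ε ^ 2 := by
  rw [gpDensity, pd1_sq_add_pd2_sq]; rfl

lemma fderiv_apply_eq_sum (Ψ : Pt → ℂ) (x y : Pt) : fderiv ℝ Ψ x y = ∑ i, (y i : ℂ) * pd i Ψ x := by
  conv_lhs => rw [← (EuclideanSpace.basisFun (Fin 2) ℝ).sum_repr y]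
  simp [pd]

lemma angMom_eq_fderiv_perp (Ψ : Pt → ℂ) (x : Pt) :
    angMom Ψ x = -Complex.I * fderiv ℝ Ψ x (perp x) := by
  rw [fderiv_apply_eq_sum, Fin.sum_univ_two, perp_apply_zero, perp_apply_one, angMom]
  simp only [pd, pd1, pd2]
  push_cast
  ring

lemma angDensity_eq_sum (Ψ : Pt → ℂ) (x : Pt) :
    angDensity Ψ x = ∑ i, perp x i * (conjGrad i Ψ x).im := by
  rw [angDensity, angMom_eq_fderiv_perp, fderiv_apply_eq_sum, Fin.sum_univ_two, Fin.sum_univ_two]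
  simp only [conjGrad, Complex.mul_re, Complex.mul_im, Complex.add_re, Complex.add_im,
    Complex.neg_re, Complex.neg_im, Complex.I_re, Complex.I_im, Complex.ofReal_re,
    Complex.ofReal_im]
  ring

lemma pd_mul (hv : DifferentiableAt ℝ v x) (hΨ : DifferentiableAt ℝ Ψ x) (i : Fin 2) :
    pd i (fun y ↦ v y * Ψ y) x = pd i v x * Ψ x + v x * pd i Ψ x := by
  simp only [pd, fderiv_fun_mul hv hΨ, add_apply,
    smul_apply, smul_eq_mul]
  ring

lemma conjGrad_mul (hv : DifferentiableAt ℝ v x) (hΨ : DifferentiableAt ℝ Ψ x) (i : Fin 2) :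
    conjGrad i (fun y ↦ v y * Ψ y) x
      = (‖v x‖ ^ 2 : ℝ) * conjGrad i Ψ x + (‖Ψ x‖ ^ 2 : ℝ) * conjGrad i v x := by
  simp only [conjGrad, pd_mul hv hΨ, map_mul, ← Complex.normSq_eq_norm_sq, ← Complex.mul_conj]
  ring

lemma gradSq_mul (hv : DifferentiableAt ℝ v x) (hΨ : DifferentiableAt ℝ Ψ x) :
    gradSq (fun y ↦ v y * Ψ y) x = ‖v x‖ ^ 2 * gradSq Ψ x + ‖Ψ x‖ ^ 2 * gradSq v x
      + ∑ i, 2 * (starRingEnd ℂ (conjGrad i v x) * conjGrad i Ψ x).re := by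
  simp only [gradSq, Finset.mul_sum, ← Finset.sum_add_distrib]
  refine Finset.sum_congr rfl fun i _ ↦ ?_
  simp only [pd_mul hv hΨ, conjGrad, ← Complex.normSq_eq_norm_sq, Complex.normSq_add,
    map_mul, Complex.conj_conj]
  have : (pd i v x * Ψ x * ((starRingEnd ℂ) (v x) * (starRingEnd ℂ) (pd i Ψ x))).re
      = (v x * (starRingEnd ℂ) (pd i v x) * ((starRingEnd ℂ) (Ψ x) * pd i Ψ x)).re := by
    rw [← Complex.conj_re]
    simp only [map_mul, Complex.conj_conj]
    ring_nf
  rw [this]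
  ring

lemma angDensity_mul (hv : DifferentiableAt ℝ v x) (hΨ : DifferentiableAt ℝ Ψ x) :
    angDensity (fun y ↦ v y * Ψ y) x = ‖v x‖ ^ 2 * angDensity Ψ x
      + ∑ i, perp x i * (‖Ψ x‖ ^ 2 * (conjGrad i v x).im) := by
  simp only [angDensity_eq_sum, conjGrad_mul hv hΨ, Complex.add_im,
    Complex.im_ofReal_mul, Finset.mul_sum, ← Finset.sum_add_distrib]
  exact Finset.sum_congr rfl fun i _ ↦ by ring

lemma kinDensity_mul (hv : DifferentiableAt ℝ v x) (hΨ : DifferentiableAt ℝ Ψ x) (Ω : ℝ) :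
    kinDensity Ω (fun y ↦ v y * Ψ y) x = ‖v x‖ ^ 2 * kinDensity Ω Ψ x + gradSq v x * ‖Ψ x‖ ^ 2
      + ∑ i, (conjGrad i v x).re * (2 * (conjGrad i Ψ x).re)
      + ∑ i, (conjGrad i v x).im * (2 * (conjGrad i Ψ x).im - Ω * perp x i * ‖Ψ x‖ ^ 2) := by
  rw [kinDensity, kinDensity, gradSq_mul hv hΨ, angDensity_mul hv hΨ]
  simp only [Fin.sum_univ_two, Complex.mul_re, Complex.conj_re, Complex.conj_im]
  ring

lemma norm_conjGrad_le (i : Fin 2) (Ψ : Pt → ℂ) (x : Pt) :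
    ‖conjGrad i Ψ x‖ ≤ ‖Ψ x‖ ^ 2 + gradSq Ψ x := by
  have hi : ‖pd i Ψ x‖ ^ 2 ≤ gradSq Ψ x :=
    Finset.single_le_sum (f := fun i ↦ ‖pd i Ψ x‖ ^ 2) (fun _ _ ↦ sq_nonneg _) (Finset.mem_univ i)
  rw [conjGrad, norm_mul, Complex.norm_conj]
  nlinarith [sq_nonneg (‖Ψ x‖ - ‖pd i Ψ x‖), sq_nonneg ‖Ψ x‖, sq_nonneg ‖pd i Ψ x‖]

lemma gradSq_nonneg (Ψ : Pt → ℂ) (x : Pt) : 0 ≤ gradSq Ψ x :=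
  Finset.sum_nonneg fun _ _ ↦ sq_nonneg _

lemma pd_conj (i : Fin 2) (Ψ : Pt → ℂ) (x : Pt) :
    pd i (fun y ↦ starRingEnd ℂ (Ψ y)) x = starRingEnd ℂ (pd i Ψ x) :=
  DFunLike.congr_fun (Complex.conjCLE.comp_fderiv (f := Ψ) (x := x)) _

lemma conjGrad_conj (i : Fin 2) (Ψ : Pt → ℂ) (x : Pt) :
    conjGrad i (fun y ↦ starRingEnd ℂ (Ψ y)) x = starRingEnd ℂ (conjGrad i Ψ x) := by
  simp only [conjGrad, pd_conj, map_mul]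

lemma gradSq_conj (Ψ : Pt → ℂ) (x : Pt) :
    gradSq (fun y ↦ starRingEnd ℂ (Ψ y)) x = gradSq Ψ x := by
  simp only [gradSq, pd_conj, Complex.norm_conj]

end

/-! ### Vortices -/

/-- The radial vortex of winding number one with profile `h`, a function of `|y|²`. -/
def radialVortex (h : ℝ → ℝ) (y : Pt) : ℂ := h (‖y‖ ^ 2) • toC y

section

variable {h : ℝ → ℝ} {h' : ℝ} {y : Pt}

lemma norm_radialVortex_sq (h : ℝ → ℝ) (y : Pt) :
    ‖radialVortex h y‖ ^ 2 = ‖y‖ ^ 2 * h (‖y‖ ^ 2) ^ 2 := by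
  rw [radialVortex, norm_smul, toC.norm_map, mul_pow, norm_eq_abs, sq_abs, mul_comm]

lemma hasFDerivAt_radialVortex (hh : HasDerivAt h h' (‖y‖ ^ 2)) :
    HasFDerivAt (radialVortex h) (h (‖y‖ ^ 2) • (toC : Pt →L[ℝ] ℂ)
      + (h' • (2 • innerSL ℝ y)).smulRight (toC y)) y :=
  (hh.comp_hasFDerivAt y (hasStrictFDerivAt_norm_sq y).hasFDerivAt).smul
    (toC : Pt →L[ℝ] ℂ).hasFDerivAt

lemma pd_radialVortex (hh : HasDerivAt h h' (‖y‖ ^ 2)) (i : Fin 2) :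
    pd i (radialVortex h) y = h (‖y‖ ^ 2) * toC (EuclideanSpace.single i 1)
      + (h' * (2 * y i) : ℝ) * toC y := by
  rw [pd, (hasFDerivAt_radialVortex hh).fderiv]
  simp [EuclideanSpace.inner_single_right]

lemma conj_toC_mul_toC_single (y : Pt) (i : Fin 2) :
    starRingEnd ℂ (toC y) * toC (EuclideanSpace.single i 1) = y i + perp y i * Complex.I := by
  fin_cases i <;> apply Complex.ext <;> simp [toC_apply, perp_apply_zero, perp_apply_one]

lemma conjGrad_radialVortex (hh : HasDerivAt h h' (‖y‖ ^ 2)) (i : Fin 2) :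
    conjGrad i (radialVortex h) y
      = (h (‖y‖ ^ 2) * (h (‖y‖ ^ 2) + 2 * ‖y‖ ^ 2 * h') * y i : ℝ)
        + (h (‖y‖ ^ 2) ^ 2 * perp y i : ℝ) * Complex.I := by
  have hy : starRingEnd ℂ (toC y) * toC y = (‖y‖ ^ 2 : ℝ) := by
    rw [mul_comm, Complex.mul_conj, Complex.normSq_eq_norm_sq, toC.norm_map]
  calc conjGrad i (radialVortex h) y
      = h (‖y‖ ^ 2) * (h (‖y‖ ^ 2) * (starRingEnd ℂ (toC y) * toC (EuclideanSpace.single i 1))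
        + (h' * (2 * y i) : ℝ) * (starRingEnd ℂ (toC y) * toC y)) := by
        rw [conjGrad, pd_radialVortex hh, radialVortex, Complex.real_smul, map_mul,
          Complex.conj_ofReal]
        ring
    _ = _ := by
        rw [conj_toC_mul_toC_single, hy]
        push_cast
        ring

lemma re_conjGrad_radialVortex (hh : HasDerivAt h h' (‖y‖ ^ 2)) (i : Fin 2) :
    (conjGrad i (radialVortex h) y).re
      = h (‖y‖ ^ 2) * (h (‖y‖ ^ 2) + 2 * ‖y‖ ^ 2 * h') * y i := by
  simp only [conjGrad_radialVortex hh, Complex.add_re, Complex.re_ofReal_mul, Complex.ofReal_re,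
    Complex.I_re, mul_zero, add_zero]

lemma im_conjGrad_radialVortex (hh : HasDerivAt h h' (‖y‖ ^ 2)) (i : Fin 2) :
    (conjGrad i (radialVortex h) y).im = h (‖y‖ ^ 2) ^ 2 * perp y i := by
  simp only [conjGrad_radialVortex hh, Complex.add_im, Complex.im_ofReal_mul, Complex.ofReal_im,
    Complex.I_im, mul_one, zero_add]

lemma gradSq_radialVortex (hh : HasDerivAt h h' (‖y‖ ^ 2)) :
    gradSq (radialVortex h) y = h (‖y‖ ^ 2) ^ 2 + (h (‖y‖ ^ 2) + 2 * ‖y‖ ^ 2 * h') ^ 2 := by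
  simp only [gradSq, pd_radialVortex hh, Fin.sum_univ_two, ← Complex.normSq_eq_norm_sq,
    Complex.normSq_apply, norm_sq_eq_sum]
  simp [toC_apply]
  ring

end

lemma hasDerivAt_inv_sqrt {t : ℝ} (ht : 0 < t) :
    HasDerivAt (fun t ↦ (√t)⁻¹) (-(2 * t * √t)⁻¹) t := by
  refine ((hasDerivAt_sqrt ht.ne').inv (sqrt_pos.2 ht).ne').congr_deriv ?_
  rw [sq_sqrt ht.le]
  field_simp

/-- The profile of the regularised vortex: a core of radius `s`, matched to `1 / |y|` with a
continuous derivative. As for `radialVortex`, the variable is `t = |y|²`. -/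
def coreProfile (s t : ℝ) : ℝ := if t ≤ s ^ 2 then (3 - t / s ^ 2) / (2 * s) else (√t)⁻¹

/-- The derivative of `coreProfile s`. -/
def coreProfileDeriv (s t : ℝ) : ℝ := if t ≤ s ^ 2 then -(2 * s ^ 3)⁻¹ else -(2 * t * √t)⁻¹

section

variable {s t : ℝ}

lemma coreProfile_of_le (ht : t ≤ s ^ 2) : coreProfile s t = (3 - t / s ^ 2) / (2 * s) := if_pos ht

lemma coreProfileDeriv_of_le (ht : t ≤ s ^ 2) : coreProfileDeriv s t = -(2 * s ^ 3)⁻¹ := if_pos ht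

lemma coreProfile_of_ge (hs : 0 < s) (ht : s ^ 2 ≤ t) : coreProfile s t = (√t)⁻¹ := by
  rcases ht.eq_or_lt with rfl | h
  · rw [coreProfile_of_le le_rfl, sqrt_sq hs.le]
    field_simp
    norm_num
  · exact if_neg h.not_ge

lemma coreProfileDeriv_of_ge (hs : 0 < s) (ht : s ^ 2 ≤ t) :
    coreProfileDeriv s t = -(2 * t * √t)⁻¹ := by
  rcases ht.eq_or_lt with rfl | h
  · rw [coreProfileDeriv_of_le le_rfl, sqrt_sq hs.le]
    ring_nf
  · exact if_neg h.not_ge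

lemma hasDerivWithinAt_coreProfile_Iic (ht : t ≤ s ^ 2) :
    HasDerivWithinAt (coreProfile s) (coreProfileDeriv s t) (Set.Iic (s ^ 2)) t := by
  have hlin : HasDerivAt (fun t ↦ (3 - t / s ^ 2) / (2 * s)) (coreProfileDeriv s t) t := by
    refine ((((hasDerivAt_id t).div_const (s ^ 2)).const_sub 3).div_const (2 * s)).congr_deriv ?_
    rw [coreProfileDeriv_of_le ht]
    ring
  exact hlin.hasDerivWithinAt.congr (fun _ ↦ coreProfile_of_le) (coreProfile_of_le ht)

lemma hasDerivWithinAt_coreProfile_Ici (hs : 0 < s) (ht : s ^ 2 ≤ t) :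
    HasDerivWithinAt (coreProfile s) (coreProfileDeriv s t) (Set.Ici (s ^ 2)) t := by
  rw [coreProfileDeriv_of_ge hs ht]
  exact (hasDerivAt_inv_sqrt ((pow_pos hs 2).trans_le ht)).hasDerivWithinAt.congr
    (fun _ ↦ coreProfile_of_ge hs) (coreProfile_of_ge hs ht)

lemma hasDerivAt_coreProfile (hs : 0 < s) (t : ℝ) :
    HasDerivAt (coreProfile s) (coreProfileDeriv s t) t := by
  rcases lt_trichotomy t (s ^ 2) with h | rfl | h
  · exact (hasDerivWithinAt_coreProfile_Iic h.le).hasDerivAt (Iic_mem_nhds h)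
  · rw [← hasDerivWithinAt_univ, ← Set.Iic_union_Ici (a := s ^ 2)]
    exact (hasDerivWithinAt_coreProfile_Iic le_rfl).union
      (hasDerivWithinAt_coreProfile_Ici hs le_rfl)
  · exact (hasDerivWithinAt_coreProfile_Ici hs h.le).hasDerivAt (Ici_mem_nhds h)

lemma mul_coreProfile_sq_of_ge (hs : 0 < s) (ht : s ^ 2 ≤ t) : t * coreProfile s t ^ 2 = 1 := by
  have ht0 : 0 < t := (pow_pos hs 2).trans_le ht
  rw [coreProfile_of_ge hs ht, inv_pow, sq_sqrt ht0.le, mul_inv_cancel₀ ht0.ne']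

lemma coreProfile_add_deriv_of_le (hs : 0 < s) (ht : t ≤ s ^ 2) :
    coreProfile s t + 2 * t * coreProfileDeriv s t = 3 * (1 - t / s ^ 2) / (2 * s) := by
  rw [coreProfile_of_le ht, coreProfileDeriv_of_le ht]
  field_simp
  ring

lemma coreProfile_add_deriv_of_ge (hs : 0 < s) (ht : s ^ 2 ≤ t) :
    coreProfile s t + 2 * t * coreProfileDeriv s t = 0 := by
  have ht0 : 0 < t := (pow_pos hs 2).trans_le ht
  have := sqrt_pos.2 ht0
  rw [coreProfile_of_ge hs ht, coreProfileDeriv_of_ge hs ht]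
  field_simp
  ring

lemma mul_coreProfile_sq_le_one (hs : 0 < s) : t * coreProfile s t ^ 2 ≤ 1 := by
  rcases le_total t (s ^ 2) with h | h
  · have hu1 : t / s ^ 2 ≤ 1 := (div_le_one (by positivity)).2 h
    have hu : t * coreProfile s t ^ 2 = (t / s ^ 2) * (3 - t / s ^ 2) ^ 2 / 4 := by
      rw [coreProfile_of_le h]
      field_simp
      norm_num
    rw [hu]
    -- `4 - u (3 - u)² = (1 - u)² (4 - u)`
    nlinarith [mul_nonneg (sq_nonneg (1 - t / s ^ 2)) (by linarith : 0 ≤ 4 - t / s ^ 2)]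
  · exact (mul_coreProfile_sq_of_ge hs h).le

lemma coreProfile_sq_add_sq_le (hs : 0 < s) (ht : 0 ≤ t) :
    coreProfile s t ^ 2 + (coreProfile s t + 2 * t * coreProfileDeriv s t) ^ 2
      ≤ 9 / (2 * s ^ 2) := by
  rcases le_total t (s ^ 2) with h | h
  · have hu0 : 0 ≤ t / s ^ 2 := by positivity
    have hu1 : t / s ^ 2 ≤ 1 := (div_le_one (by positivity)).2 h
    rw [coreProfile_add_deriv_of_le hs h, coreProfile_of_le h, div_pow, div_pow, ← add_div,
      div_le_div_iff₀ (by positivity) (by positivity)]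
    have : (3 - t / s ^ 2) ^ 2 + (3 * (1 - t / s ^ 2)) ^ 2 ≤ 18 := by nlinarith
    nlinarith [mul_le_mul_of_nonneg_right this (sq_nonneg s)]
  · rw [coreProfile_add_deriv_of_ge hs h, coreProfile_of_ge hs h, inv_pow, sq_sqrt ht]
    have : t⁻¹ ≤ (s ^ 2)⁻¹ := inv_anti₀ (by positivity) h
    have : (s ^ 2)⁻¹ ≤ 9 / (2 * s ^ 2) := by
      rw [inv_eq_one_div, div_le_div_iff₀ (by positivity) (by positivity)]
      nlinarith [sq_nonneg s]
    linarith

end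

/-- A bounded measurable function. -/
structure BoundedMeasurable (w : Pt → ℝ) : Prop where
  measurable : Measurable w
  bounded : ∃ C, ∀ y, |w y| ≤ C

namespace BoundedMeasurable

variable {w : Pt → ℝ}

lemma integrableOn_comp_const_sub (hw : BoundedMeasurable w) (x : Pt) (R : ℝ) :
    IntegrableOn (fun p ↦ w (x - p)) (Metric.ball 0 R) := by
  obtain ⟨C, hC⟩ := hw.bounded
  exact .of_bound measure_ball_lt_top
    (hw.measurable.comp (measurable_const.sub measurable_id)).aestronglyMeasurable C
    (.of_forall fun _ ↦ hC _)

lemma integrableOn_ball (hw : BoundedMeasurable w) (R : ℝ) : IntegrableOn w (Metric.ball 0 R) := by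
  obtain ⟨C, hC⟩ := hw.bounded
  exact .of_bound measure_ball_lt_top hw.measurable.aestronglyMeasurable C (.of_forall fun _ ↦ hC _)

lemma integrable_comp_sub_mul (hw : BoundedMeasurable w) {u : Pt → ℝ} {s : Set Pt}
    (hu : IntegrableOn u s) (p : Pt) : IntegrableOn (fun x ↦ w (x - p) * u x) s := by
  obtain ⟨C, hC⟩ := hw.bounded
  exact hu.bdd_mul (hw.measurable.comp (measurable_id.sub_const p)).aestronglyMeasurable
    (.of_forall fun _ ↦ hC _)

lemma integrable_prod_comp_sub_mul (hw : BoundedMeasurable w) {u : Pt → ℝ} {s : Set Pt}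
    (hu : IntegrableOn u s) (R : ℝ) :
    Integrable (fun z : Pt × Pt ↦ w (z.2 - z.1) * u z.2)
      ((volume.restrict (Metric.ball 0 R)).prod (volume.restrict s)) := by
  obtain ⟨C, hC⟩ := hw.bounded
  have : IsFiniteMeasure (volume.restrict (Metric.ball (0 : Pt) R)) :=
    isFiniteMeasure_restrict.2 measure_ball_lt_top.ne
  exact (hu.comp_snd _).bdd_mul
    (hw.measurable.comp (measurable_snd.sub measurable_fst)).aestronglyMeasurable
    (.of_forall fun _ ↦ hC _)

end BoundedMeasurable

lemma integral_eq_zero_of_odd {w : Pt → ℝ} (hw : w.Odd) : ∫ y, w y = 0 := by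
  have h : ∫ y, -w y = ∫ y, w y := by
    simpa only [hw _] using integral_neg_eq_self w volume
  rw [integral_neg] at h
  linarith

lemma setIntegral_ball_comp_const_sub {w : Pt → ℝ} {r s : ℝ} {x : Pt}
    (hw : ∀ y, s ≤ ‖y‖ → w y = 0) (hx : ‖x‖ < r) :
    ∫ p in Metric.ball 0 (r + s), w (x - p) = ∫ y, w y := by
  rw [setIntegral_eq_integral_of_forall_compl_eq_zero, integral_sub_left_eq_self w volume x]
  intro p hp
  apply hw
  rw [mem_ball_zero_iff, not_lt] at hp
  have := norm_sub_norm_le p x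
  rw [norm_sub_rev] at this
  linarith

lemma volume_real_ball (x : Pt) {r : ℝ} (hr : 0 ≤ r) :
    volume.real (Metric.ball x r) = π * r ^ 2 := by
  rw [Measure.real, EuclideanSpace.volume_ball_fin_two]
  simp [ENNReal.toReal_ofReal, hr, pi_pos.le, mul_comm]

lemma integral_ball_fun_norm (f : ℝ → ℝ) {R : ℝ} (hR : 0 ≤ R) :
    ∫ x in Metric.ball (0 : Pt) R, f ‖x‖ = 2 * π * ∫ r in 0..R, r * f r := by
  have hball : (Metric.ball (0 : Pt) R).indicator (fun x ↦ f ‖x‖)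
      = fun x ↦ (Set.Iio R).indicator f ‖x‖ := by
    ext x
    simp only [Set.indicator, mem_ball_zero_iff, Set.mem_Iio]
  calc ∫ x in Metric.ball (0 : Pt) R, f ‖x‖
      = 2 * π * ∫ r in Set.Ioi 0, r * (Set.Iio R).indicator f r := by
        rw [← integral_indicator measurableSet_ball, hball,
          integral_fun_norm_addHaar volume, volume_real_ball 0 zero_le_one]
        simp [mul_assoc]
    _ = 2 * π * ∫ r in 0..R, r * f r := by
        simp_rw [← Set.indicator_mul_right (Set.Iio R) (fun r ↦ r)]
        rw [setIntegral_indicator measurableSet_Iio, Set.Ioi_inter_Iio,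
          intervalIntegral.integral_of_le hR, integral_Ioc_eq_integral_Ioo]

lemma integral_ball_max_norm_sq_inv {s R : ℝ} (hs : 0 < s) (hsR : s ≤ R) :
    ∫ x in Metric.ball (0 : Pt) R, (max ‖x‖ s ^ 2)⁻¹ = π + 2 * π * log (R / s) := by
  have hmax (r : ℝ) : max r s ^ 2 ≠ 0 := (pow_pos (lt_max_of_lt_right hs) 2).ne'
  have hint (a b : ℝ) : IntervalIntegrable (fun r ↦ r * (max r s ^ 2)⁻¹) volume a b :=
    Continuous.intervalIntegrable (by fun_prop (disch := exact hmax _)) a b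
  have hcore : ∫ r in 0..s, r * (max r s ^ 2)⁻¹ = 1 / 2 := by
    rw [intervalIntegral.integral_congr (g := fun r ↦ r * (s ^ 2)⁻¹)]
    · simp
      field_simp
    · intro r hr
      rw [Set.uIcc_of_le hs.le] at hr
      simp [max_eq_right hr.2]
  have htail : ∫ r in s..R, r * (max r s ^ 2)⁻¹ = log (R / s) := by
    rw [← integral_inv_of_pos hs (hs.trans_le hsR)]
    refine intervalIntegral.integral_congr fun r hr ↦ ?_
    rw [Set.uIcc_of_le hsR] at hr
    have : 0 < r := hs.trans_le hr.1
    simp only [max_eq_left hr.1]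
    field_simp
  rw [integral_ball_fun_norm (fun r ↦ (max r s ^ 2)⁻¹) (hs.le.trans hsR),
    ← intervalIntegral.integral_add_adjacent_intervals (hint 0 s) (hint s R), hcore, htail]
  ring

/-- The regularised vortex with core radius `s`. -/
def vortex (s : ℝ) : Pt → ℂ := radialVortex (coreProfile s)

section

variable {s : ℝ} (hs : 0 < s) {y : Pt}
include hs

lemma differentiable_vortex : Differentiable ℝ (vortex s) := fun y ↦
  (hasFDerivAt_radialVortex (hasDerivAt_coreProfile hs (‖y‖ ^ 2))).differentiableAt

lemma norm_vortex_sq_le_one (y : Pt) : ‖vortex s y‖ ^ 2 ≤ 1 := by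
  rw [vortex, norm_radialVortex_sq]
  exact mul_coreProfile_sq_le_one hs

lemma norm_vortex_sq_of_le_norm (hy : s ≤ ‖y‖) : ‖vortex s y‖ ^ 2 = 1 := by
  rw [vortex, norm_radialVortex_sq, mul_coreProfile_sq_of_ge hs (pow_le_pow_left₀ hs.le hy 2)]

lemma gradSq_vortex_le (y : Pt) : gradSq (vortex s) y ≤ 9 / (2 * s ^ 2) := by
  rw [vortex, gradSq_radialVortex (hasDerivAt_coreProfile hs _)]
  exact coreProfile_sq_add_sq_le hs (sq_nonneg _)

lemma gradSq_vortex_of_le_norm (hy : s ≤ ‖y‖) : gradSq (vortex s) y = (‖y‖ ^ 2)⁻¹ := by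
  have hsy := pow_le_pow_left₀ hs.le hy 2
  rw [vortex, gradSq_radialVortex (hasDerivAt_coreProfile hs _),
    coreProfile_add_deriv_of_ge hs hsy, coreProfile_of_ge hs hsy, sqrt_sq (norm_nonneg y)]
  ring

lemma re_conjGrad_vortex (i : Fin 2) (y : Pt) : (conjGrad i (vortex s) y).re
    = coreProfile s (‖y‖ ^ 2)
      * (coreProfile s (‖y‖ ^ 2) + 2 * ‖y‖ ^ 2 * coreProfileDeriv s (‖y‖ ^ 2)) * y i :=
  re_conjGrad_radialVortex (hasDerivAt_coreProfile hs _) i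

lemma im_conjGrad_vortex (i : Fin 2) (y : Pt) :
    (conjGrad i (vortex s) y).im = coreProfile s (‖y‖ ^ 2) ^ 2 * perp y i :=
  im_conjGrad_radialVortex (hasDerivAt_coreProfile hs _) i

lemma odd_re_conjGrad_vortex (i : Fin 2) : (fun y ↦ (conjGrad i (vortex s) y).re).Odd := fun y ↦ by
  simp only [re_conjGrad_vortex hs, norm_neg, PiLp.neg_apply, mul_neg]

lemma odd_im_conjGrad_vortex (i : Fin 2) : (fun y ↦ (conjGrad i (vortex s) y).im).Odd := fun y ↦ by
  simp only [im_conjGrad_vortex hs, norm_neg, map_neg, PiLp.neg_apply, mul_neg]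

lemma re_conjGrad_vortex_of_le_norm (i : Fin 2) (hy : s ≤ ‖y‖) :
    (conjGrad i (vortex s) y).re = 0 := by
  rw [re_conjGrad_vortex hs,
    coreProfile_add_deriv_of_ge hs (pow_le_pow_left₀ hs.le hy 2), mul_zero, zero_mul]

lemma im_conjGrad_vortex_of_le_norm (i : Fin 2) (hy : s ≤ ‖y‖) :
    (conjGrad i (vortex s) y).im = (‖y‖ ^ 2)⁻¹ * perp y i := by
  rw [im_conjGrad_vortex hs, coreProfile_of_ge hs (pow_le_pow_left₀ hs.le hy 2), inv_pow,
    sq_sqrt (sq_nonneg _)]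

lemma norm_conjGrad_vortex_le (i : Fin 2) (y : Pt) :
    ‖conjGrad i (vortex s) y‖ ≤ 1 + 9 / (2 * s ^ 2) :=
  (norm_conjGrad_le i (vortex s) y).trans
    (add_le_add (norm_vortex_sq_le_one hs y) (gradSq_vortex_le hs y))

lemma measurable_conjGrad_vortex (i : Fin 2) : Measurable (conjGrad i (vortex s)) :=
  (Complex.continuous_conj.comp (differentiable_vortex hs).continuous).measurable.mul
    (measurable_fderiv_apply_const ℝ _ _)

lemma boundedMeasurable_norm_vortex_sq : BoundedMeasurable fun y ↦ ‖vortex s y‖ ^ 2 where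
  measurable := ((differentiable_vortex hs).continuous.norm.pow 2).measurable
  bounded := ⟨1, fun y ↦ by
    rw [abs_of_nonneg (sq_nonneg _)]
    exact norm_vortex_sq_le_one hs y⟩

lemma boundedMeasurable_one_sub_norm_vortex_sq :
    BoundedMeasurable fun y ↦ 1 - ‖vortex s y‖ ^ 2 where
  measurable := (boundedMeasurable_norm_vortex_sq hs).measurable.const_sub 1
  bounded := ⟨1, fun y ↦ abs_le.2 (by
    constructor <;> linarith [sq_nonneg ‖vortex s y‖, norm_vortex_sq_le_one hs y])⟩

lemma boundedMeasurable_gradSq_vortex : BoundedMeasurable (gradSq (vortex s)) where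
  measurable := Finset.measurable_fun_sum _ fun _ _ ↦
    (measurable_fderiv_apply_const ℝ _ _).norm.pow_const 2
  bounded := ⟨9 / (2 * s ^ 2), fun y ↦ by
    rw [abs_of_nonneg (gradSq_nonneg _ _)]
    exact gradSq_vortex_le hs y⟩

lemma boundedMeasurable_re_conjGrad_vortex (i : Fin 2) :
    BoundedMeasurable fun y ↦ (conjGrad i (vortex s) y).re where
  measurable := Complex.measurable_re.comp (measurable_conjGrad_vortex hs i)
  bounded := ⟨_, fun y ↦ (Complex.abs_re_le_norm _).trans (norm_conjGrad_vortex_le hs i y)⟩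

lemma boundedMeasurable_im_conjGrad_vortex (i : Fin 2) :
    BoundedMeasurable fun y ↦ (conjGrad i (vortex s) y).im where
  measurable := Complex.measurable_im.comp (measurable_conjGrad_vortex hs i)
  bounded := ⟨_, fun y ↦ (Complex.abs_im_le_norm _).trans (norm_conjGrad_vortex_le hs i y)⟩

omit hs in
/-- The mass `∫ (1 - |v|²)` missing from the core of a vortex. -/
def massDefect (s : ℝ) : ℝ := ∫ y, (1 - ‖vortex s y‖ ^ 2)

lemma massDefect_nonneg : 0 ≤ massDefect s :=
  integral_nonneg fun y ↦ sub_nonneg.2 (norm_vortex_sq_le_one hs y)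

lemma one_sub_norm_vortex_sq_eq_zero (hy : y ∉ Metric.ball 0 s) : 1 - ‖vortex s y‖ ^ 2 = 0 := by
  rw [mem_ball_zero_iff, not_lt] at hy
  rw [norm_vortex_sq_of_le_norm hs hy, sub_self]

lemma integrable_one_sub_norm_vortex_sq : Integrable fun y ↦ 1 - ‖vortex s y‖ ^ 2 :=
  ((boundedMeasurable_one_sub_norm_vortex_sq hs).integrableOn_ball s)
    |>.integrable_of_forall_notMem_eq_zero fun _ ↦ one_sub_norm_vortex_sq_eq_zero hs

lemma massDefect_le : massDefect s ≤ π * s ^ 2 := by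
  rw [massDefect, ← volume_real_ball 0 hs.le,
    ← setIntegral_eq_integral_of_forall_compl_eq_zero fun _ ↦ one_sub_norm_vortex_sq_eq_zero hs,
    ← mul_one (volume.real _), ← smul_eq_mul, ← setIntegral_const]
  exact integral_mono ((boundedMeasurable_one_sub_norm_vortex_sq hs).integrableOn_ball s)
    (integrableOn_const measure_ball_lt_top.ne) fun y ↦ by simp

lemma integral_one_sub_norm_vortex_sq_sub {x : Pt} {r : ℝ} (hx : ‖x‖ < r) :
    ∫ p in Metric.ball 0 (r + s), (1 - ‖vortex s (x - p)‖ ^ 2) = massDefect s :=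
  setIntegral_ball_comp_const_sub (w := fun y ↦ 1 - ‖vortex s y‖ ^ 2)
    (fun _ hy ↦ one_sub_norm_vortex_sq_eq_zero hs (by simpa using hy)) hx

lemma integral_norm_vortex_sq_sub {x : Pt} {r : ℝ} (hx : ‖x‖ < r) :
    ∫ p in Metric.ball 0 (r + s), ‖vortex s (x - p)‖ ^ 2 = π * (r + s) ^ 2 - massDefect s := by
  have hball : volume.real (Metric.ball (0 : Pt) (r + s)) = π * (r + s) ^ 2 :=
    volume_real_ball 0 (by linarith [norm_nonneg x])
  rw [← integral_one_sub_norm_vortex_sq_sub hs hx, integral_sub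
    (integrableOn_const measure_ball_lt_top.ne).integrable
    ((boundedMeasurable_norm_vortex_sq hs).integrableOn_comp_const_sub x _), setIntegral_const,
    hball, smul_eq_mul]
  ring

lemma integral_re_conjGrad_vortex_sub {x : Pt} {r : ℝ} (hx : ‖x‖ < r) (i : Fin 2) :
    ∫ p in Metric.ball 0 (r + s), (conjGrad i (vortex s) (x - p)).re = 0 := by
  rw [setIntegral_ball_comp_const_sub (w := fun y ↦ (conjGrad i (vortex s) y).re)
    (fun y hy ↦ re_conjGrad_vortex_of_le_norm hs i hy) hx,
    integral_eq_zero_of_odd (odd_re_conjGrad_vortex hs i)]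

/- The singular field `perp y / |y|²` is handled by Newton's theorem; the vortex differs from it
only by an odd field supported in the core. -/
lemma integral_im_conjGrad_vortex_sub {x : Pt} {r : ℝ} (hx : ‖x‖ < r) (i : Fin 2) :
    ∫ p in Metric.ball 0 (r + s), (conjGrad i (vortex s) (x - p)).im = π * perp x i := by
  let L : Pt →L[ℝ] ℝ := EuclideanSpace.proj i ∘L perp
  have hL (y : Pt) : L ((‖y‖ ^ 2)⁻¹ • y) = (‖y‖ ^ 2)⁻¹ * perp y i := by
    rw [map_smul, smul_eq_mul]; rfl
  have hint := L.integrable_comp (integrableOn_norm_sq_inv_smul_const_sub x (r + s))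
  have hnewton : ∫ p in Metric.ball 0 (r + s), (‖x - p‖ ^ 2)⁻¹ * perp (x - p) i
      = π * perp x i := by
    simp_rw [← hL]
    rw [L.integral_comp_comm (integrableOn_norm_sq_inv_smul_const_sub x (r + s)),
      integral_ball_norm_sq_inv_smul_const_sub (by linarith), map_smul, smul_eq_mul]
    rfl
  have hodd : ∫ p in Metric.ball 0 (r + s),
      ((conjGrad i (vortex s) (x - p)).im - (‖x - p‖ ^ 2)⁻¹ * perp (x - p) i) = 0 := by
    rw [setIntegral_ball_comp_const_sub
      (w := fun y ↦ (conjGrad i (vortex s) y).im - (‖y‖ ^ 2)⁻¹ * perp y i) (s := s)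
      (fun y hy ↦ by rw [im_conjGrad_vortex_of_le_norm hs i hy, sub_self]) hx]
    refine integral_eq_zero_of_odd fun y ↦ ?_
    have := odd_im_conjGrad_vortex hs i y
    simp only at this
    simp only [this, norm_neg, map_neg, PiLp.neg_apply]
    ring
  simp only [hL] at hint
  rw [integral_sub ((boundedMeasurable_im_conjGrad_vortex hs i).integrableOn_comp_const_sub x _)
    hint, hnewton] at hodd
  linarith

lemma gradSq_vortex_le_max_add_indicator (y : Pt) : gradSq (vortex s) y
    ≤ (max ‖y‖ s ^ 2)⁻¹ + (Metric.ball 0 s).indicator (fun _ ↦ 7 / (2 * s ^ 2)) y := by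
  by_cases hy : ‖y‖ < s
  · rw [max_eq_right hy.le, Set.indicator_of_mem (mem_ball_zero_iff.2 hy)]
    refine (gradSq_vortex_le hs y).trans_eq ?_
    field_simp
    norm_num
  · rw [max_eq_left (not_lt.1 hy), Set.indicator_of_notMem (mt mem_ball_zero_iff.1 hy), add_zero,
      gradSq_vortex_of_le_norm hs (not_lt.1 hy)]

lemma boundedMeasurable_max_norm_sq_inv : BoundedMeasurable fun y : Pt ↦ (max ‖y‖ s ^ 2)⁻¹ where
  measurable := by fun_prop
  bounded := ⟨(s ^ 2)⁻¹, fun y ↦ by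
    rw [abs_of_nonneg (by positivity)]
    exact inv_anti₀ (by positivity) (pow_le_pow_left₀ hs.le (le_max_right _ _) 2)⟩

lemma integral_ball_gradSq_vortex_le {R : ℝ} (hsR : s ≤ R) :
    ∫ y in Metric.ball 0 R, gradSq (vortex s) y ≤ 2 * π * (log (R / s) + 9 / 4) := by
  have hmax := (boundedMeasurable_max_norm_sq_inv hs).integrableOn_ball R
  have hcore : IntegrableOn ((Metric.ball (0 : Pt) s).indicator fun _ ↦ 7 / (2 * s ^ 2))
      (Metric.ball 0 R) := (integrableOn_const measure_ball_lt_top.ne).indicator measurableSet_ball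
  calc ∫ y in Metric.ball 0 R, gradSq (vortex s) y
      ≤ ∫ y in Metric.ball 0 R, ((max ‖y‖ s ^ 2)⁻¹
          + (Metric.ball 0 s).indicator (fun _ ↦ 7 / (2 * s ^ 2)) y) :=
        integral_mono ((boundedMeasurable_gradSq_vortex hs).integrableOn_ball R) (hmax.add hcore)
          (gradSq_vortex_le_max_add_indicator hs)
    _ = π + 2 * π * log (R / s) + π * s ^ 2 * (7 / (2 * s ^ 2)) := by
        rw [integral_add hmax hcore, integral_ball_max_norm_sq_inv hs hsR,
          setIntegral_indicator measurableSet_ball,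
          Set.inter_eq_right.2 (Metric.ball_subset_ball hsR), setIntegral_const,
          volume_real_ball 0 hs.le, smul_eq_mul]
    _ = 2 * π * (log (R / s) + 9 / 4) := by
        field_simp
        ring

lemma integral_gradSq_vortex_sub_le (hs1 : s ≤ 1) {x : Pt} (hx : ‖x‖ < 1) :
    ∫ p in Metric.ball 0 (1 + s), gradSq (vortex s) (x - p) ≤ 2 * π * (|log s| + 4) := by
  have hlog3 : log 3 ≤ 1.7 := by
    rw [log_le_iff_le_exp (by norm_num)]
    linarith [quadratic_le_exp_of_nonneg (show (0 : ℝ) ≤ 1.7 by norm_num)]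
  have hlog : log (3 / s) = log 3 + |log s| := by
    rw [log_div (by norm_num) hs.ne', abs_of_nonpos (log_nonpos hs.le hs1), sub_eq_add_neg]
  have hsub : (fun p ↦ x - p) ⁻¹' Metric.ball 0 3 ⊇ Metric.ball 0 (1 + s) := fun p hp ↦ by
    rw [mem_ball_zero_iff] at hp
    rw [Set.mem_preimage, mem_ball_zero_iff]
    linarith [norm_sub_le x p]
  have hmp := Measure.measurePreserving_sub_left (volume : Measure Pt) x
  have hemb := (MeasurableEquiv.subLeft x).measurableEmbedding
  calc ∫ p in Metric.ball 0 (1 + s), gradSq (vortex s) (x - p)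
      ≤ ∫ p in (fun p ↦ x - p) ⁻¹' Metric.ball 0 3, gradSq (vortex s) (x - p) :=
        setIntegral_mono_set
          ((hmp.integrableOn_comp_preimage hemb).2
            ((boundedMeasurable_gradSq_vortex hs).integrableOn_ball 3))
          (.of_forall fun _ ↦ gradSq_nonneg _ _) (.of_forall hsub)
    _ = ∫ y in Metric.ball 0 3, gradSq (vortex s) y := hmp.setIntegral_preimage_emb hemb _ _
    _ ≤ 2 * π * (log (3 / s) + 9 / 4) := integral_ball_gradSq_vortex_le hs (by linarith)
    _ ≤ 2 * π * (|log s| + 4) := by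
        rw [hlog]
        exact mul_le_mul_of_nonneg_left (by linarith) (by positivity)

end

/-! ### The Gross–Pitaevskii energy -/

lemma measurableSet_B1 : MeasurableSet B1 := measurableSet_ball

lemma norm_lt_one_of_mem_B1 {x : Pt} (hx : x ∈ B1) : ‖x‖ < 1 := mem_ball_zero_iff.1 hx

lemma norm_sq_mul_le {x : Pt} (hx : x ∈ B1) {t : ℝ} (ht : 0 ≤ t) : ‖x‖ ^ 2 * t ≤ t :=
  mul_le_of_le_one_left ht (pow_le_one₀ (norm_nonneg _) (norm_lt_one_of_mem_B1 hx).le)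

lemma integrableOn_B1_const {E : Type*} [NormedAddCommGroup E] (c : E) :
    IntegrableOn (fun _ ↦ c) B1 :=
  integrableOn_const measure_ball_lt_top.ne

lemma volume_real_B1 : volume.real B1 = π := by
  rw [B1, volume_real_ball 0 zero_le_one, one_pow, mul_one]

/-- The squared `L²` norm on the disc. -/
def mass (Ψ : Pt → ℂ) : ℝ := ∫ x in B1, ‖Ψ x‖ ^ 2

/-- The interaction integral `∫ |Ψ|⁴`. -/
def quartic (Ψ : Pt → ℂ) : ℝ := ∫ x in B1, ‖Ψ x‖ ^ 4

/-- The quadratic part of the Gross–Pitaevskii functional. -/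
def kinEnergy (Ω : ℝ) (Ψ : Pt → ℂ) : ℝ := ∫ x in B1, kinDensity Ω Ψ x

/-- The expected angular momentum. -/
def angMean (Ψ : Pt → ℂ) : ℝ := ∫ x in B1, angDensity Ψ x

/-- The expectation of `|x|²`. -/
def secondMoment (Ψ : Pt → ℂ) : ℝ := ∫ x in B1, ‖x‖ ^ 2 * ‖Ψ x‖ ^ 2

lemma quartic_nonneg (Ψ : Pt → ℂ) : 0 ≤ quartic Ψ :=
  integral_nonneg fun _ ↦ by positivity

lemma secondMoment_nonneg (Ψ : Pt → ℂ) : 0 ≤ secondMoment Ψ :=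
  integral_nonneg fun _ ↦ by positivity

/- Completing the square: `|∇Ψ|² - Ω conj(Ψ) LΨ = |(∇ - i Ω x^⊥ / 2) Ψ|² - Ω² |x|² |Ψ|² / 4`. -/
lemma neg_le_kinDensity (Ω : ℝ) (Ψ : Pt → ℂ) (x : Pt) :
    -(Ω ^ 2 / 4) * (‖x‖ ^ 2 * ‖Ψ x‖ ^ 2) ≤ kinDensity Ω Ψ x := by
  rw [kinDensity, angDensity_eq_sum, gradSq, ← sum_perp_sq, Finset.sum_mul, Finset.mul_sum,
    Finset.mul_sum, ← Finset.sum_sub_distrib]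
  refine Finset.sum_le_sum fun i _ ↦ ?_
  have him : |(conjGrad i Ψ x).im| ≤ ‖Ψ x‖ * ‖pd i Ψ x‖ := by
    simpa only [conjGrad, norm_mul, Complex.norm_conj] using Complex.abs_im_le_norm (conjGrad i Ψ x)
  have hcross : Ω * (perp x i * (conjGrad i Ψ x).im)
      ≤ |Ω * perp x i| * (‖Ψ x‖ * ‖pd i Ψ x‖) := by
    rw [← mul_assoc]
    exact (le_abs_self _).trans
      ((abs_mul _ _).trans_le (mul_le_mul_of_nonneg_left him (abs_nonneg _)))
  have hsq : |Ω * perp x i| ^ 2 = Ω ^ 2 * perp x i ^ 2 := by rw [sq_abs, mul_pow]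
  nlinarith [sq_nonneg (‖pd i Ψ x‖ - |Ω * perp x i| * ‖Ψ x‖ / 2), congrArg (· * ‖Ψ x‖ ^ 2) hsq]

lemma abs_angDensity_le (Ψ : Pt → ℂ) {x : Pt} (hx : x ∈ B1) :
    |angDensity Ψ x| ≤ ‖Ψ x‖ ^ 2 + gradSq Ψ x := by
  have h₁ := neg_le_kinDensity 1 Ψ x
  have h₂ := neg_le_kinDensity (-1) Ψ x
  have hx2 := norm_sq_mul_le hx (sq_nonneg ‖Ψ x‖)
  rw [kinDensity] at h₁ h₂
  rw [abs_le]
  constructor <;> linarith [sq_nonneg ‖Ψ x‖]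

lemma mass_const_mul (c : ℂ) (Ψ : Pt → ℂ) : mass (fun x ↦ c * Ψ x) = ‖c‖ ^ 2 * mass Ψ := by
  simp only [mass, norm_mul, mul_pow, integral_const_mul]

lemma quartic_const_mul (c : ℂ) (Ψ : Pt → ℂ) :
    quartic (fun x ↦ c * Ψ x) = ‖c‖ ^ 4 * quartic Ψ := by
  simp only [quartic, norm_mul, mul_pow, integral_const_mul]

/-- The unnormalised wave functions of finite energy. -/
structure FiniteEnergy (Ψ : Pt → ℂ) : Prop where
  differentiableOn : DifferentiableOn ℝ Ψ B1
  integrable_norm_sq : IntegrableOn (fun x ↦ ‖Ψ x‖ ^ 2) B1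
  integrable_gradSq : IntegrableOn (gradSq Ψ) B1
  integrable_norm_pow_four : IntegrableOn (fun x ↦ ‖Ψ x‖ ^ 4) B1

lemma gpAdm.finiteEnergy {Ψ : Pt → ℂ} (h : gpAdm Ψ) : FiniteEnergy Ψ where
  differentiableOn := h.1
  integrable_norm_sq := h.2.1
  integrable_gradSq := by simpa only [pd1_sq_add_pd2_sq] using h.2.2.1
  integrable_norm_pow_four := h.2.2.2.1

lemma gpAdm.mass_eq_one {Ψ : Pt → ℂ} (h : gpAdm Ψ) : mass Ψ = 1 := h.2.2.2.2.2

lemma measurable_gradSq (Ψ : Pt → ℂ) : Measurable (gradSq Ψ) :=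
  Finset.measurable_fun_sum _ fun _ _ ↦ (measurable_fderiv_apply_const ℝ _ _).norm.pow_const 2

namespace FiniteEnergy

variable {v Ψ : Pt → ℂ}

lemma differentiableAt (h : FiniteEnergy Ψ) {x : Pt} (hx : x ∈ B1) : DifferentiableAt ℝ Ψ x :=
  h.differentiableOn.differentiableAt (Metric.isOpen_ball.mem_nhds hx)

lemma aestronglyMeasurable (h : FiniteEnergy Ψ) :
    AEStronglyMeasurable Ψ (volume.restrict B1) :=
  h.differentiableOn.continuousOn.aestronglyMeasurable measurableSet_B1

lemma integrable_conjGrad (h : FiniteEnergy Ψ) (i : Fin 2) : IntegrableOn (conjGrad i Ψ) B1 :=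
  (h.integrable_norm_sq.add h.integrable_gradSq).mono'
    ((Complex.continuous_conj.comp_aestronglyMeasurable h.aestronglyMeasurable).mul
      (measurable_fderiv_apply_const ℝ _ _).aestronglyMeasurable)
    (.of_forall (norm_conjGrad_le i Ψ))

lemma integrable_angDensity (h : FiniteEnergy Ψ) : IntegrableOn (angDensity Ψ) B1 := by
  refine (h.integrable_norm_sq.add h.integrable_gradSq).mono' ?_ ?_
  · simp_rw [funext (angDensity_eq_sum Ψ), Fin.sum_univ_two]
    have hi (i : Fin 2) := (h.integrable_conjGrad i).im.aestronglyMeasurable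
    have hp (i : Fin 2) : Continuous fun x ↦ perp x i := by fun_prop
    exact ((hp 0).aestronglyMeasurable.mul (hi 0)).add ((hp 1).aestronglyMeasurable.mul (hi 1))
  · filter_upwards [ae_restrict_mem measurableSet_B1] with x hx using abs_angDensity_le Ψ hx

lemma integrable_kinDensity (h : FiniteEnergy Ψ) (Ω : ℝ) : IntegrableOn (kinDensity Ω Ψ) B1 :=
  h.integrable_gradSq.sub (h.integrable_angDensity.const_mul Ω)

lemma integrable_norm_sq_mul (h : FiniteEnergy Ψ) :
    IntegrableOn (fun x ↦ ‖x‖ ^ 2 * ‖Ψ x‖ ^ 2) B1 := by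
  refine h.integrable_norm_sq.mono' ((continuous_norm.pow 2).aestronglyMeasurable.mul
    h.integrable_norm_sq.aestronglyMeasurable) ?_
  filter_upwards [ae_restrict_mem measurableSet_B1] with x hx
  rw [norm_of_nonneg (by positivity)]
  exact norm_sq_mul_le hx (sq_nonneg _)

lemma integrable_gpDensity (h : FiniteEnergy Ψ) (ε Ω : ℝ) : IntegrableOn (gpDensity ε Ω Ψ) B1 := by
  simp only [funext (gpDensity_eq_kinDensity_add ε Ω Ψ)]
  exact (h.integrable_kinDensity Ω).add (h.integrable_norm_pow_four.div_const _)

lemma integrable_current (h : FiniteEnergy Ψ) (Ω : ℝ) (i : Fin 2) :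
    IntegrableOn (fun x ↦ 2 * (conjGrad i Ψ x).im - Ω * perp x i * ‖Ψ x‖ ^ 2) B1 := by
  refine ((h.integrable_conjGrad i).im.const_mul 2).sub
    (h.integrable_norm_sq.bdd_mul (c := |Ω|)
      (by fun_prop : Continuous fun x ↦ Ω * perp x i).aestronglyMeasurable ?_)
  filter_upwards [ae_restrict_mem measurableSet_B1] with x hx
  have hperp : |perp x i| ≤ 1 := by
    rw [← sq_le_one_iff_abs_le_one]
    refine (Finset.single_le_sum (f := fun i ↦ perp x i ^ 2) (fun _ _ ↦ sq_nonneg _)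
      (Finset.mem_univ i)).trans ?_
    rw [sum_perp_sq]
    exact pow_le_one₀ (norm_nonneg _) (norm_lt_one_of_mem_B1 hx).le
  rw [norm_mul]
  exact mul_le_of_le_one_right (abs_nonneg _) hperp

lemma gpAdm_of_mass_eq_one (h : FiniteEnergy Ψ) (h1 : mass Ψ = 1) : gpAdm Ψ :=
  ⟨h.differentiableOn, h.integrable_norm_sq,
    by simpa only [pd1_sq_add_pd2_sq] using h.integrable_gradSq,
    h.integrable_norm_pow_four, h.integrable_angDensity, h1⟩

lemma gpEnergy_eq (h : FiniteEnergy Ψ) (ε Ω : ℝ) :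
    gpEnergy ε Ω Ψ = kinEnergy Ω Ψ + quartic Ψ / ε ^ 2 := by
  simp only [gpEnergy, gpDensity_eq_kinDensity_add]
  rw [integral_add (h.integrable_kinDensity Ω) (h.integrable_norm_pow_four.div_const _),
    integral_div]
  rfl

lemma neg_le_kinEnergy (h : FiniteEnergy Ψ) (Ω : ℝ) :
    -(Ω ^ 2 / 4) * secondMoment Ψ ≤ kinEnergy Ω Ψ := by
  rw [secondMoment, ← integral_const_mul]
  exact integral_mono (h.integrable_norm_sq_mul.const_mul _) (h.integrable_kinDensity Ω)
    (neg_le_kinDensity Ω Ψ)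

lemma secondMoment_le_mass (h : FiniteEnergy Ψ) : secondMoment Ψ ≤ mass Ψ :=
  setIntegral_mono_on h.integrable_norm_sq_mul h.integrable_norm_sq measurableSet_B1
    fun _ hx ↦ norm_sq_mul_le hx (sq_nonneg _)

lemma mul (h : FiniteEnergy Ψ) (hv : Differentiable ℝ v) {C G : ℝ} (hC : ∀ x, ‖v x‖ ^ 2 ≤ C)
    (hG : ∀ x, gradSq v x ≤ G) : FiniteEnergy fun x ↦ v x * Ψ x := by
  have hm := hv.continuous.aestronglyMeasurable.mul h.aestronglyMeasurable
  refine ⟨hv.differentiableOn.mul h.differentiableOn,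
    (h.integrable_norm_sq.const_mul C).mono' (hm.norm.pow 2) (.of_forall fun x ↦ ?_),
    ((h.integrable_gradSq.const_mul (2 * C)).add (h.integrable_norm_sq.const_mul (2 * G))).mono'
      (measurable_gradSq _).aestronglyMeasurable ?_,
    (h.integrable_norm_pow_four.const_mul (C ^ 2)).mono' (hm.norm.pow 4) (.of_forall fun x ↦ ?_)⟩
  · rw [norm_of_nonneg (by positivity), norm_mul, mul_pow]
    exact mul_le_mul_of_nonneg_right (hC x) (by positivity)
  · filter_upwards [ae_restrict_mem measurableSet_B1] with x hx
    rw [norm_of_nonneg (gradSq_nonneg _ _)]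
    calc gradSq (fun x ↦ v x * Ψ x) x
        ≤ 2 * (‖v x‖ ^ 2 * gradSq Ψ x) + 2 * (gradSq v x * ‖Ψ x‖ ^ 2) := by
          simp only [gradSq, Finset.mul_sum, Finset.sum_mul, ← Finset.sum_add_distrib]
          refine Finset.sum_le_sum fun i _ ↦ ?_
          rw [pd_mul (hv x) (h.differentiableAt hx), ← mul_pow, ← mul_pow, ← norm_mul, ← norm_mul]
          refine (pow_le_pow_left₀ (norm_nonneg _) (norm_add_le _ _) 2).trans ?_
          linarith [sq_nonneg (‖pd i v x * Ψ x‖ - ‖v x * pd i Ψ x‖)]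
      _ ≤ 2 * C * gradSq Ψ x + 2 * G * ‖Ψ x‖ ^ 2 := by
          have := mul_le_mul_of_nonneg_right (hC x) (gradSq_nonneg Ψ x)
          have := mul_le_mul_of_nonneg_right (hG x) (sq_nonneg ‖Ψ x‖)
          linarith
  · rw [norm_of_nonneg (by positivity), norm_mul, mul_pow]
    refine mul_le_mul_of_nonneg_right ?_ (by positivity)
    simpa only [← pow_mul] using pow_le_pow_left₀ (sq_nonneg ‖v x‖) (hC x) 2

lemma const_mul (h : FiniteEnergy Ψ) (c : ℂ) : FiniteEnergy fun x ↦ c * Ψ x :=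
  h.mul (v := fun _ ↦ c) (differentiable_const c) (fun _ ↦ le_rfl)
    (G := 0) (fun x ↦ by simp [gradSq, pd])

lemma kinEnergy_const_mul (h : FiniteEnergy Ψ) (Ω : ℝ) (c : ℂ) :
    kinEnergy Ω (fun x ↦ c * Ψ x) = ‖c‖ ^ 2 * kinEnergy Ω Ψ := by
  rw [kinEnergy, kinEnergy, ← integral_const_mul]
  refine setIntegral_congr_fun measurableSet_B1 fun x hx ↦ ?_
  refine (kinDensity_mul (differentiableAt_const c) (h.differentiableAt hx) Ω).trans ?_
  simp [gradSq, conjGrad, pd]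

end FiniteEnergy

lemma le_gpEnergy {Ψ : Pt → ℂ} (h : gpAdm Ψ) (ε Ω : ℝ) :
    -(Ω ^ 2 / 4) + quartic Ψ / ε ^ 2 ≤ gpEnergy ε Ω Ψ := by
  rw [h.finiteEnergy.gpEnergy_eq]
  have hm := h.finiteEnergy.secondMoment_le_mass
  rw [h.mass_eq_one] at hm
  nlinarith [h.finiteEnergy.neg_le_kinEnergy Ω, sq_nonneg Ω]

lemma gpGround_le {Ψ : Pt → ℂ} (h : gpAdm Ψ) (ε Ω : ℝ) : gpGround ε Ω ≤ gpEnergy ε Ω Ψ := by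
  refine csInf_le ⟨-(Ω ^ 2 / 4), ?_⟩ ⟨Ψ, h, rfl⟩
  rintro _ ⟨Φ, hΦ, rfl⟩
  have : 0 ≤ quartic Φ / ε ^ 2 := div_nonneg (quartic_nonneg Φ) (sq_nonneg ε)
  linarith [le_gpEnergy hΦ ε Ω]

lemma gpGround_mul_mass_le {Ψ : Pt → ℂ} (h : FiniteEnergy Ψ) (ε Ω : ℝ) (hm : 0 < mass Ψ) :
    gpGround ε Ω * mass Ψ ≤ kinEnergy Ω Ψ + quartic Ψ / ε ^ 2 / mass Ψ := by
  set c : ℂ := Complex.ofReal (√(mass Ψ))⁻¹ with hc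
  have hc2 : ‖c‖ ^ 2 = (mass Ψ)⁻¹ := by
    rw [hc, Complex.norm_real, norm_eq_abs, sq_abs, inv_pow, sq_sqrt hm.le]
  have hadm : gpAdm fun x ↦ c * Ψ x := (h.const_mul c).gpAdm_of_mass_eq_one (by
    rw [mass_const_mul, hc2, inv_mul_cancel₀ hm.ne'])
  have hle := gpGround_le hadm ε Ω
  rw [hadm.finiteEnergy.gpEnergy_eq, h.kinEnergy_const_mul, quartic_const_mul,
    show ‖c‖ ^ 4 = (‖c‖ ^ 2) ^ 2 by ring, hc2] at hle
  calc gpGround ε Ω * mass Ψ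
      ≤ ((mass Ψ)⁻¹ * kinEnergy Ω Ψ + (mass Ψ)⁻¹ ^ 2 * quartic Ψ / ε ^ 2) * mass Ψ :=
        mul_le_mul_of_nonneg_right hle hm.le
    _ = kinEnergy Ω Ψ + quartic Ψ / ε ^ 2 / mass Ψ := by field_simp

lemma gpGround_le_inv {ε : ℝ} (Ω : ℝ) : gpGround ε Ω ≤ 1 / (π * ε ^ 2) := by
  have hgrad : gradSq (fun _ ↦ 1) = fun _ ↦ 0 := by
    ext
    simp [gradSq, pd]
  have hfin : FiniteEnergy fun _ ↦ (1 : ℂ) :=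
    ⟨differentiableOn_const _, integrableOn_B1_const _, hgrad ▸ integrableOn_B1_const _,
      integrableOn_B1_const _⟩
  have hmass : mass (fun _ ↦ 1) = π := by simp [mass, volume_real_B1]
  have hquartic : quartic (fun _ ↦ 1) = π := by simp [quartic, volume_real_B1]
  have hkin : kinEnergy Ω (fun _ ↦ 1) = 0 := by
    simp [kinEnergy, kinDensity, gradSq, pd, angDensity, angMom_eq_fderiv_perp]
  have hle := gpGround_mul_mass_le hfin ε Ω (hmass.symm ▸ pi_pos)
  rw [hmass, hquartic, hkin, zero_add, div_right_comm, div_self pi_ne_zero] at hle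
  rwa [mul_comm π, ← div_div, le_div_iff₀ pi_pos]

lemma IsGPMinimizer.quartic_le {ε Ω : ℝ} {Ψ : Pt → ℂ} (hε : 0 < ε) (h : IsGPMinimizer ε Ω Ψ) :
    quartic Ψ ≤ 1 / π + (Ω * ε) ^ 2 / 4 := by
  have hle := (le_gpEnergy h.1 ε Ω).trans (h.2.le.trans (gpGround_le_inv Ω))
  rw [← le_sub_iff_add_le', div_le_iff₀ (by positivity)] at hle
  refine hle.trans_eq ?_
  field_simp
  ring

/-! ### Inserting a vortex at a random point -/

lemma pd_comp_sub_const (i : Fin 2) (v : Pt → ℂ) (p x : Pt) :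
    pd i (fun y ↦ v (y - p)) x = pd i v (x - p) := by
  rw [pd, fderiv_comp_sub, pd]

lemma conjGrad_comp_sub_const (i : Fin 2) (v : Pt → ℂ) (p x : Pt) :
    conjGrad i (fun y ↦ v (y - p)) x = conjGrad i v (x - p) := by
  rw [conjGrad, pd_comp_sub_const, conjGrad]

lemma gradSq_comp_sub_const (v : Pt → ℂ) (p x : Pt) :
    gradSq (fun y ↦ v (y - p)) x = gradSq v (x - p) := by
  simp only [gradSq, pd_comp_sub_const]

/-- The product of `Φ` with a vortex centred at `p`. -/
def insertVortex (s : ℝ) (p : Pt) (Φ : Pt → ℂ) (x : Pt) : ℂ := vortex s (x - p) * Φ x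

/-- A bound for the energy gained by inserting a vortex at `p` into a state `Φ`, as a density in
`x`. The term with `1 - |v|²` is the cost of restoring the normalisation. -/
def insertionDensity (ε Ω s : ℝ) (Φ : Pt → ℂ) (p x : Pt) : ℝ :=
  ‖vortex s (x - p)‖ ^ 2 * (gpDensity ε Ω Φ x - gpGround ε Ω * ‖Φ x‖ ^ 2)
    + (1 - ‖vortex s (x - p)‖ ^ 2) * (2 * (quartic Φ / ε ^ 2) * ‖Φ x‖ ^ 2)
    + gradSq (vortex s) (x - p) * ‖Φ x‖ ^ 2
    + ∑ i, (conjGrad i (vortex s) (x - p)).re * (2 * (conjGrad i Φ x).re)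
    + ∑ i, (conjGrad i (vortex s) (x - p)).im
        * (2 * (conjGrad i Φ x).im - Ω * perp x i * ‖Φ x‖ ^ 2)

section

variable {s : ℝ} (hs : 0 < s) {Φ : Pt → ℂ}
include hs

lemma FiniteEnergy.insertVortex (h : FiniteEnergy Φ) (p : Pt) :
    FiniteEnergy (insertVortex s p Φ) :=
  h.mul ((differentiable_vortex hs).comp (differentiable_id.sub_const p))
    (fun x ↦ norm_vortex_sq_le_one hs (x - p))
    (fun x ↦ (gradSq_comp_sub_const _ p x).trans_le (gradSq_vortex_le hs (x - p)))

lemma insertionDensity_eq {x : Pt} (hΦ : DifferentiableAt ℝ Φ x) (ε Ω : ℝ) (p : Pt) :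
    insertionDensity ε Ω s Φ p x
      = kinDensity Ω (insertVortex s p Φ) x + ‖vortex s (x - p)‖ ^ 2 * ‖Φ x‖ ^ 4 / ε ^ 2
        + 2 * (quartic Φ / ε ^ 2) * (‖Φ x‖ ^ 2 - ‖insertVortex s p Φ x‖ ^ 2)
        - gpGround ε Ω * ‖insertVortex s p Φ x‖ ^ 2 := by
  have hv : DifferentiableAt ℝ (fun y ↦ vortex s (y - p)) x :=
    ((differentiable_vortex hs).comp (differentiable_id.sub_const p)).differentiableAt
  have hkin := kinDensity_mul hv hΦ Ω
  simp only [conjGrad_comp_sub_const, gradSq_comp_sub_const] at hkin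
  change kinDensity Ω (insertVortex s p Φ) x = _ at hkin
  rw [hkin, insertionDensity, gpDensity_eq_kinDensity_add, insertVortex, norm_mul, mul_pow]
  ring

lemma massDefect_insertVortex_le (h : gpAdm Φ) (p : Pt) :
    1 - mass (insertVortex s p Φ) ≤ s / 2 * (quartic Φ + π) := by
  have hB := (integrable_one_sub_norm_vortex_sq hs).comp_sub_right p
  have hdefect : ∫ x in B1, (1 - ‖vortex s (x - p)‖ ^ 2) ≤ π * s ^ 2 := by
    refine (setIntegral_le_integral hB
      (.of_forall fun x ↦ sub_nonneg.2 (norm_vortex_sq_le_one hs (x - p)))).trans ?_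
    rw [integral_sub_right_eq_self fun y ↦ 1 - ‖vortex s y‖ ^ 2]
    exact massDefect_le hs
  calc 1 - mass (insertVortex s p Φ)
      = ∫ x in B1, (‖Φ x‖ ^ 2 - ‖insertVortex s p Φ x‖ ^ 2) := by
        rw [integral_sub h.2.1 (h.finiteEnergy.insertVortex hs p).integrable_norm_sq,
          h.2.2.2.2.2]
        rfl
    _ ≤ ∫ x in B1, (s / 2 * ‖Φ x‖ ^ 4 + (2 * s)⁻¹ * (1 - ‖vortex s (x - p)‖ ^ 2)) := by
        refine integral_mono
          (h.2.1.sub (h.finiteEnergy.insertVortex hs p).integrable_norm_sq)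
          ((h.finiteEnergy.integrable_norm_pow_four.const_mul _).add
            (hB.integrableOn.const_mul _)) fun x ↦ ?_
        simp only [_root_.insertVortex, norm_mul, mul_pow]
        set a := 1 - ‖vortex s (x - p)‖ ^ 2
        have ha0 : 0 ≤ a := sub_nonneg.2 (norm_vortex_sq_le_one hs (x - p))
        have ha1 : a ≤ 1 := sub_le_self _ (sq_nonneg _)
        have hyoung : s / 2 * ‖Φ x‖ ^ 4 + (2 * s)⁻¹ * a ^ 2 - a * ‖Φ x‖ ^ 2
            = (2 * s)⁻¹ * (s * ‖Φ x‖ ^ 2 - a) ^ 2 := by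
          field_simp
          ring
        have : 0 ≤ (2 * s)⁻¹ * (s * ‖Φ x‖ ^ 2 - a) ^ 2 := by positivity
        have : (2 * s)⁻¹ * a ^ 2 ≤ (2 * s)⁻¹ * a :=
          mul_le_mul_of_nonneg_left (pow_le_of_le_one ha0 ha1 two_ne_zero) (by positivity)
        linarith
    _ = s / 2 * quartic Φ + (2 * s)⁻¹ * ∫ x in B1, (1 - ‖vortex s (x - p)‖ ^ 2) := by
        rw [integral_add (h.finiteEnergy.integrable_norm_pow_four.const_mul _)
          (hB.integrableOn.const_mul _), integral_const_mul, integral_const_mul, quartic]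
    _ ≤ s / 2 * quartic Φ + (2 * s)⁻¹ * (π * s ^ 2) := by gcongr
    _ = s / 2 * (quartic Φ + π) := by
        field_simp

lemma mass_insertVortex_le (h : gpAdm Φ) (p : Pt) : mass (insertVortex s p Φ) ≤ 1 := by
  rw [← h.mass_eq_one]
  refine integral_mono (h.finiteEnergy.insertVortex hs p).integrable_norm_sq h.2.1 fun x ↦ ?_
  simp only [insertVortex, norm_mul, mul_pow]
  exact mul_le_of_le_one_left (sq_nonneg _) (norm_vortex_sq_le_one hs _)

lemma quartic_insertVortex_le (h : FiniteEnergy Φ) (p : Pt) :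
    quartic (insertVortex s p Φ) ≤ ∫ x in B1, ‖vortex s (x - p)‖ ^ 2 * ‖Φ x‖ ^ 4 := by
  refine integral_mono (h.insertVortex hs p).integrable_norm_pow_four
    ((boundedMeasurable_norm_vortex_sq hs).integrable_comp_sub_mul h.integrable_norm_pow_four p)
    fun x ↦ ?_
  simp only [_root_.insertVortex, norm_mul, mul_pow]
  have := pow_le_of_le_one (sq_nonneg _) (norm_vortex_sq_le_one hs (x - p)) two_ne_zero
  exact mul_le_mul_of_nonneg_right (by simpa only [← pow_mul] using this) (by positivity)

lemma integral_norm_vortex_sq_mul_le_quartic (h : FiniteEnergy Φ) (p : Pt) :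
    ∫ x in B1, ‖vortex s (x - p)‖ ^ 2 * ‖Φ x‖ ^ 4 ≤ quartic Φ :=
  integral_mono
    ((boundedMeasurable_norm_vortex_sq hs).integrable_comp_sub_mul h.integrable_norm_pow_four p)
    h.integrable_norm_pow_four
    fun x ↦ mul_le_of_le_one_left (by positivity) (norm_vortex_sq_le_one hs (x - p))

omit hs in
lemma div_le_add_two_mul {a b N : ℝ} (ha : 0 ≤ a) (hab : a ≤ b) (hN : 1 / 2 ≤ N) (hN1 : N ≤ 1) :
    a / N ≤ a + 2 * b * (1 - N) := by
  rw [div_le_iff₀ (by linarith)]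
  nlinarith [mul_nonneg ha (mul_nonneg (sub_nonneg.2 hN1) (sub_nonneg.2 hN)),
    mul_nonneg (mul_nonneg (sub_nonneg.2 hab) (sub_nonneg.2 hN1)) (by linarith : 0 ≤ N)]

lemma integral_insertionDensity (h : gpAdm Φ) (ε Ω : ℝ) (p : Pt) :
    ∫ x in B1, insertionDensity ε Ω s Φ p x
      = kinEnergy Ω (insertVortex s p Φ) + (∫ x in B1, ‖vortex s (x - p)‖ ^ 2 * ‖Φ x‖ ^ 4) / ε ^ 2
        + 2 * (quartic Φ / ε ^ 2) * (1 - mass (insertVortex s p Φ))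
        - gpGround ε Ω * mass (insertVortex s p Φ) := by
  have hfin := h.finiteEnergy
  have hins := hfin.insertVortex hs p
  have hkin := hins.integrable_kinDensity Ω
  have hquart := ((boundedMeasurable_norm_vortex_sq hs).integrable_comp_sub_mul
    hfin.integrable_norm_pow_four p).div_const (ε ^ 2)
  have hdiff : IntegrableOn (fun x ↦ 2 * (quartic Φ / ε ^ 2)
      * (‖Φ x‖ ^ 2 - ‖insertVortex s p Φ x‖ ^ 2)) B1 :=
    (hfin.integrable_norm_sq.sub hins.integrable_norm_sq).const_mul _
  rw [setIntegral_congr_fun measurableSet_B1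
      fun x hx ↦ insertionDensity_eq hs (hfin.differentiableAt hx) ε Ω p,
    integral_sub ((hkin.fun_add hquart).fun_add hdiff) (hins.integrable_norm_sq.const_mul _),
    integral_add (hkin.fun_add hquart) hdiff, integral_add hkin hquart, integral_div,
    integral_const_mul, integral_const_mul,
    integral_sub hfin.integrable_norm_sq hins.integrable_norm_sq, h.2.2.2.2.2]
  rfl

lemma integral_insertionDensity_nonneg (h : gpAdm Φ) (hsΦ : s * (quartic Φ + π) ≤ 1) (ε Ω : ℝ)
    (p : Pt) : 0 ≤ ∫ x in B1, insertionDensity ε Ω s Φ p x := by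
  have hfin := h.finiteEnergy
  rw [integral_insertionDensity hs h]
  set N := mass (insertVortex s p Φ)
  set b := ∫ x in B1, ‖vortex s (x - p)‖ ^ 2 * ‖Φ x‖ ^ 4
  have hN2 : 1 / 2 ≤ N := by linarith [massDefect_insertVortex_le hs h p]
  have hN1 : N ≤ 1 := mass_insertVortex_le hs h p
  have hground := gpGround_mul_mass_le (hfin.insertVortex hs p) ε Ω (by linarith)
  have hdiv : quartic (insertVortex s p Φ) / ε ^ 2 / N
      ≤ b / ε ^ 2 + 2 * (quartic Φ / ε ^ 2) * (1 - N) := by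
    have h₁ : quartic (insertVortex s p Φ) / ε ^ 2 ≤ b / ε ^ 2 := by
      gcongr
      exact quartic_insertVortex_le hs hfin p
    have h₂ : b / ε ^ 2 ≤ quartic Φ / ε ^ 2 := by
      gcongr
      exact integral_norm_vortex_sq_mul_le_quartic hs hfin p
    have h₀ : 0 ≤ quartic (insertVortex s p Φ) / ε ^ 2 :=
      div_nonneg (quartic_nonneg _) (sq_nonneg ε)
    linarith [div_le_add_two_mul h₀ (h₁.trans h₂) hN2 hN1]
  linarith

lemma integrable_prod_insertionDensity (h : FiniteEnergy Φ) (ε Ω R : ℝ) :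
    Integrable (fun z : Pt × Pt ↦ insertionDensity ε Ω s Φ z.1 z.2)
      ((volume.restrict (Metric.ball 0 R)).prod (volume.restrict B1)) := by
  have h₀ := (h.integrable_gpDensity ε Ω).sub (h.integrable_norm_sq.const_mul (gpGround ε Ω))
  refine (((((boundedMeasurable_norm_vortex_sq hs).integrable_prod_comp_sub_mul h₀ R).add
    ((boundedMeasurable_one_sub_norm_vortex_sq hs).integrable_prod_comp_sub_mul
      (h.integrable_norm_sq.const_mul _) R)).add
    ((boundedMeasurable_gradSq_vortex hs).integrable_prod_comp_sub_mul
      h.integrable_norm_sq R)).add (integrable_finsetSum _ fun i _ ↦ ?_)).add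
    (integrable_finsetSum _ fun i _ ↦ ?_)
  · exact (boundedMeasurable_re_conjGrad_vortex hs i).integrable_prod_comp_sub_mul
      ((h.integrable_conjGrad i).re.const_mul 2) R
  · exact (boundedMeasurable_im_conjGrad_vortex hs i).integrable_prod_comp_sub_mul
      (h.integrable_current Ω i) R

lemma integral_insertionDensity_le (hs1 : s ≤ 1) (ε Ω : ℝ) {x : Pt} (hx : x ∈ B1) :
    ∫ p in Metric.ball 0 (1 + s), insertionDensity ε Ω s Φ p x
      ≤ (π * (1 + s) ^ 2 - massDefect s) * (gpDensity ε Ω Φ x - gpGround ε Ω * ‖Φ x‖ ^ 2)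
        + massDefect s * (2 * (quartic Φ / ε ^ 2) * ‖Φ x‖ ^ 2)
        + 2 * π * (|log s| + 4) * ‖Φ x‖ ^ 2
        + π * (2 * angDensity Φ x - Ω * (‖x‖ ^ 2 * ‖Φ x‖ ^ 2)) := by
  have hx1 := norm_lt_one_of_mem_B1 hx
  have hint {w : Pt → ℝ} (hw : BoundedMeasurable w) (c : ℝ) :
      IntegrableOn (fun p ↦ w (x - p) * c) (Metric.ball 0 (1 + s)) :=
    (hw.integrableOn_comp_const_sub x _).mul_const c
  have h₁ := hint (boundedMeasurable_norm_vortex_sq hs)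
    (gpDensity ε Ω Φ x - gpGround ε Ω * ‖Φ x‖ ^ 2)
  have h₂ := hint (boundedMeasurable_one_sub_norm_vortex_sq hs)
    (2 * (quartic Φ / ε ^ 2) * ‖Φ x‖ ^ 2)
  have h₃ := hint (boundedMeasurable_gradSq_vortex hs) (‖Φ x‖ ^ 2)
  have h₄ (i : Fin 2) := hint (boundedMeasurable_re_conjGrad_vortex hs i)
    (2 * (conjGrad i Φ x).re)
  have h₅ (i : Fin 2) := hint (boundedMeasurable_im_conjGrad_vortex hs i)
    (2 * (conjGrad i Φ x).im - Ω * perp x i * ‖Φ x‖ ^ 2)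
  have hcurrent : ∑ i, π * perp x i * (2 * (conjGrad i Φ x).im - Ω * perp x i * ‖Φ x‖ ^ 2)
      = π * (2 * angDensity Φ x - Ω * (‖x‖ ^ 2 * ‖Φ x‖ ^ 2)) := by
    rw [angDensity_eq_sum, ← sum_perp_sq, Fin.sum_univ_two, Fin.sum_univ_two, Fin.sum_univ_two]
    ring
  simp only [insertionDensity]
  rw [integral_add (((h₁.fun_add h₂).fun_add h₃).fun_add (integrable_finsetSum _ fun i _ ↦ h₄ i))
      (integrable_finsetSum _ fun i _ ↦ h₅ i),
    integral_add ((h₁.fun_add h₂).fun_add h₃) (integrable_finsetSum _ fun i _ ↦ h₄ i),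
    integral_add (h₁.fun_add h₂) h₃, integral_add h₁ h₂, integral_finsetSum _ fun i _ ↦ h₄ i,
    integral_finsetSum _ fun i _ ↦ h₅ i]
  simp only [integral_mul_const, integral_norm_vortex_sq_sub hs hx1,
    integral_one_sub_norm_vortex_sq_sub hs hx1, integral_re_conjGrad_vortex_sub hs hx1,
    integral_im_conjGrad_vortex_sub hs hx1, zero_mul, Finset.sum_const_zero, hcurrent]
  linarith [mul_le_mul_of_nonneg_right (integral_gradSq_vortex_sub_le hs hs1 hx1)
    (sq_nonneg ‖Φ x‖)]

/- Newton's theorem is what makes the average computable: up to the core, averaging the velocity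
field of the vortex over its position in the disc gives a rigid rotation, which couples to `Φ`
through its angular momentum and second moment only. -/
theorem vortex_insertion (h : gpAdm Φ) (hsΦ : s * (quartic Φ + π) ≤ 1) (ε Ω : ℝ) :
    (π * (1 + s) ^ 2 - massDefect s) * (gpGround ε Ω - gpEnergy ε Ω Φ)
      ≤ 2 * massDefect s * (quartic Φ / ε ^ 2) + 2 * π * (|log s| + 4)
        + π * (2 * angMean Φ - Ω * secondMoment Φ) := by
  have hs1 : s ≤ 1 := (le_mul_of_one_le_right hs.le
    (by linarith [quartic_nonneg Φ, pi_gt_three])).trans hsΦ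
  have hfin := h.finiteEnergy
  have hN := hfin.integrable_norm_sq
  have h₁ : IntegrableOn (fun x ↦ (π * (1 + s) ^ 2 - massDefect s)
      * (gpDensity ε Ω Φ x - gpGround ε Ω * ‖Φ x‖ ^ 2)) B1 :=
    ((hfin.integrable_gpDensity ε Ω).sub (hN.const_mul _)).const_mul _
  have h₂ := (hN.const_mul (2 * (quartic Φ / ε ^ 2))).const_mul (massDefect s)
  have h₃ := hN.const_mul (2 * π * (|log s| + 4))
  have h₄ : IntegrableOn (fun x ↦ π * (2 * angDensity Φ x - Ω * (‖x‖ ^ 2 * ‖Φ x‖ ^ 2))) B1 :=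
    ((hfin.integrable_angDensity.const_mul 2).sub
      (hfin.integrable_norm_sq_mul.const_mul Ω)).const_mul π
  have hprod := integrable_prod_insertionDensity hs hfin ε Ω (1 + s)
  have hpos : 0 ≤ ∫ p in Metric.ball 0 (1 + s), ∫ x in B1, insertionDensity ε Ω s Φ p x :=
    integral_nonneg fun p ↦ integral_insertionDensity_nonneg hs h hsΦ ε Ω p
  rw [integral_integral_swap hprod] at hpos
  have hle := hpos.trans (setIntegral_mono_on hprod.integral_prod_right
    (((h₁.fun_add h₂).fun_add h₃).fun_add h₄) measurableSet_B1
    fun x hx ↦ integral_insertionDensity_le hs hs1 ε Ω hx)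
  rw [integral_add ((h₁.fun_add h₂).fun_add h₃) h₄, integral_add (h₁.fun_add h₂) h₃,
    integral_add h₁ h₂, integral_const_mul, integral_const_mul, integral_const_mul,
    integral_const_mul, integral_const_mul,
    integral_sub (hfin.integrable_gpDensity ε Ω) (hN.const_mul _),
    integral_sub (hfin.integrable_angDensity.const_mul 2) (hfin.integrable_norm_sq_mul.const_mul Ω),
    integral_const_mul, integral_const_mul, integral_const_mul, h.2.2.2.2.2] at hle
  change 0 ≤ _ * (gpEnergy ε Ω Φ - _) + _ + _ + _ * (_ * angMean Φ - _ * secondMoment Φ) at hle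
  linarith

end

/-! ### Eigenfunctions of the angular momentum -/

/-- The rotation of the plane by the angle `θ`. -/
def planeRot (θ : ℝ) : Pt →L[ℝ] Pt := complexMul (Complex.exp (θ * Complex.I))

lemma toC_planeRot (θ : ℝ) (x : Pt) : toC (planeRot θ x) = Complex.exp (θ * Complex.I) * toC x :=
  toC_complexMul _ x

lemma planeRot_zero (x : Pt) : planeRot 0 x = x :=
  toC.injective (by simp [toC_planeRot])

lemma norm_planeRot (θ : ℝ) (x : Pt) : ‖planeRot θ x‖ = ‖x‖ := by
  rw [← toC.norm_map, toC_planeRot, norm_mul, Complex.norm_exp_ofReal_mul_I, one_mul, toC.norm_map]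

lemma planeRot_mem_B1 {x : Pt} (hx : x ∈ B1) (θ : ℝ) : planeRot θ x ∈ B1 :=
  mem_ball_zero_iff.2 ((norm_planeRot θ x).trans_lt (norm_lt_one_of_mem_B1 hx))

lemma hasDerivAt_cexp_ofReal_mul (c : ℂ) (θ : ℝ) :
    HasDerivAt (fun t : ℝ ↦ Complex.exp (t * c)) (c * Complex.exp (θ * c)) θ := by
  simpa [mul_comm] using (Complex.ofRealCLM.hasDerivAt.mul_const c).cexp (x := θ)

lemma hasDerivAt_planeRot (x : Pt) (θ : ℝ) :
    HasDerivAt (fun t ↦ planeRot t x) (perp (planeRot θ x)) θ := by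
  have hrot (t : ℝ) : planeRot t x = toC.symm (Complex.exp (t * Complex.I) * toC x) := by
    rw [← toC_planeRot, toC.symm_apply_apply]
  have hperp : perp (planeRot θ x)
      = toC.symm (Complex.I * Complex.exp (θ * Complex.I) * toC x) := by
    rw [mul_assoc, ← toC_planeRot, ← toC_perp, toC.symm_apply_apply]
  rw [hperp, funext hrot]
  exact toC.symm.toContinuousLinearEquiv.toContinuousLinearMap.hasFDerivAt.comp_hasDerivAt θ
    ((hasDerivAt_cexp_ofReal_mul Complex.I θ).mul_const (toC x))

/-- `Ψ` is an eigenfunction of the angular momentum in the disc, with eigenvalue `n`. -/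
def IsAngMomEigenfunction (n : ℤ) (Ψ : Pt → ℂ) : Prop := ∀ x ∈ B1, angMom Ψ x = n * Ψ x

namespace IsAngMomEigenfunction

variable {n : ℤ} {Ψ : Pt → ℂ} {x : Pt} (hΨ : IsAngMomEigenfunction n Ψ)
include hΨ

lemma angDensity_eq (hx : x ∈ B1) : angDensity Ψ x = n * ‖Ψ x‖ ^ 2 := by
  rw [angDensity, hΨ x hx, mul_left_comm, mul_comm (starRingEnd ℂ (Ψ x)), Complex.mul_conj,
    Complex.normSq_eq_norm_sq, ← Complex.ofReal_intCast, Complex.re_ofReal_mul, Complex.ofReal_re]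

lemma fderiv_perp (hx : x ∈ B1) : fderiv ℝ Ψ x (perp x) = Complex.I * n * Ψ x := by
  have h := hΨ x hx
  rw [angMom_eq_fderiv_perp] at h
  linear_combination Complex.I * h + fderiv ℝ Ψ x (perp x) * Complex.I_mul_I

lemma apply_zero (hn : n ≠ 0) : Ψ 0 = 0 := by
  simpa [Complex.I_ne_zero, hn] using hΨ.fderiv_perp (Metric.mem_ball_self one_pos)

lemma apply_planeRot (hd : DifferentiableOn ℝ Ψ B1) (hx : x ∈ B1) (θ : ℝ) :
    Ψ (planeRot θ x) = Complex.exp (θ * (Complex.I * n)) * Ψ x := by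
  set c : ℂ := Complex.I * n
  have hconst (t : ℝ) :
      HasDerivAt (fun t : ℝ ↦ Complex.exp (t * -c) * Ψ (planeRot t x)) 0 t := by
    have hrot := planeRot_mem_B1 hx t
    have h := (hd.differentiableAt (Metric.isOpen_ball.mem_nhds hrot)).hasFDerivAt.comp_hasDerivAt
      t (hasDerivAt_planeRot x t)
    rw [hΨ.fderiv_perp hrot] at h
    refine ((hasDerivAt_cexp_ofReal_mul (-c) t).mul h).congr_deriv ?_
    simp only [Function.comp_apply, c]
    ring
  have h := is_const_of_deriv_eq_zero (fun t ↦ (hconst t).differentiableAt)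
    (fun t ↦ (hconst t).deriv) θ 0
  simp only [planeRot_zero, Complex.ofReal_zero, zero_mul, Complex.exp_zero, one_mul] at h
  rw [← h, ← mul_assoc, ← Complex.exp_add, mul_neg, add_neg_cancel, Complex.exp_zero, one_mul]

/- `L` commutes with the rotations, so the differential of `Ψ` at the origin satisfies
`A ∘ perp = i n A`; since `perp² = -1`, this forces `n² = 1` unless `A = 0`. -/
lemma hasFDerivAt_zero (hd : DifferentiableOn ℝ Ψ B1) (hn : n ^ 2 ≠ 1) :
    HasFDerivAt Ψ (0 : Pt →L[ℝ] ℂ) 0 := by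
  have h0 : B1 ∈ nhds 0 := Metric.ball_mem_nhds 0 one_pos
  have hA := (hd.differentiableAt h0).hasFDerivAt
  set A := fderiv ℝ Ψ 0
  have hrot (θ : ℝ) (y : Pt) : A (planeRot θ y) = Complex.exp (θ * (Complex.I * n)) * A y := by
    have h₁ : HasFDerivAt (fun x ↦ Ψ (planeRot θ x)) (A.comp (planeRot θ)) 0 :=
      HasFDerivAt.comp 0 (by rwa [map_zero]) (planeRot θ).hasFDerivAt
    have h₂ := (hA.const_mul (Complex.exp (θ * (Complex.I * n)))).congr_of_eventuallyEq
      (Filter.mem_of_superset h0 fun x hx ↦ hΨ.apply_planeRot hd hx θ)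
    exact DFunLike.congr_fun (h₁.unique h₂) y
  have hperp (y : Pt) : A (perp y) = Complex.I * n * A y := by
    have h₁ := A.hasFDerivAt.comp_hasDerivAt 0 (hasDerivAt_planeRot y 0)
    have h₂ := (hasDerivAt_cexp_ofReal_mul (Complex.I * n) 0).mul_const (A y)
    rw [planeRot_zero] at h₁
    simpa using h₁.unique (h₂.congr_of_eventuallyEq (.of_forall fun θ ↦ hrot θ y))
  have hA0 : A = 0 := by
    ext y
    have hpp : perp (perp y) = -y := toC.injective (by
      rw [toC_perp, toC_perp, ← mul_assoc, Complex.I_mul_I, neg_one_mul, map_neg])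
    have hy : ((n : ℂ) ^ 2 - 1) * A y = 0 := by
      have := hperp (perp y)
      rw [hpp, map_neg, hperp] at this
      linear_combination this + n ^ 2 * A y * Complex.I_mul_I
    exact (mul_eq_zero.1 hy).resolve_left (sub_ne_zero.2 (by exact_mod_cast hn))
  rwa [hA0] at hA

lemma norm_sq_div_le_gradSq (hn : n ≠ 0) (hx : x ∈ B1) : ‖Ψ x‖ ^ 2 / ‖x‖ ^ 2 ≤ gradSq Ψ x := by
  have hn1 : (1 : ℝ) ≤ n ^ 2 := by
    exact_mod_cast (one_le_sq_iff_one_le_abs n).2 (Int.one_le_abs hn)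
  have hcs : ‖fderiv ℝ Ψ x (perp x)‖ ^ 2 ≤ ‖x‖ ^ 2 * gradSq Ψ x := by
    rw [fderiv_apply_eq_sum, ← sum_perp_sq, gradSq]
    refine (pow_le_pow_left₀ (norm_nonneg _) (norm_sum_le _ _) 2).trans ?_
    simpa using Finset.sum_mul_sq_le_sq_mul_sq Finset.univ (fun i ↦ ‖(perp x i : ℂ)‖)
      fun i ↦ ‖pd i Ψ x‖
  rw [hΨ.fderiv_perp hx, norm_mul, norm_mul, Complex.norm_I, one_mul, Complex.norm_intCast,
    mul_pow, sq_abs] at hcs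
  refine div_le_of_le_mul₀ (sq_nonneg _) (gradSq_nonneg _ _) ?_
  rw [mul_comm]
  exact (le_mul_of_one_le_left (sq_nonneg _) hn1).trans hcs

lemma integrable_norm_sq_div (h : FiniteEnergy Ψ) (hn : n ≠ 0) :
    IntegrableOn (fun x ↦ ‖Ψ x‖ ^ 2 / ‖x‖ ^ 2) B1 := by
  refine h.integrable_gradSq.mono' (h.integrable_norm_sq.aestronglyMeasurable.mul
    (by fun_prop : Measurable fun x : Pt ↦ (‖x‖ ^ 2)⁻¹).aestronglyMeasurable) ?_
  filter_upwards [ae_restrict_mem measurableSet_B1] with x hx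
  rw [norm_of_nonneg (by positivity)]
  exact hΨ.norm_sq_div_le_gradSq hn hx

end IsAngMomEigenfunction

/-! ### Removing a unit of winding -/

/-- `Ψ` with one unit of winding about the origin removed: the product with `conj x / |x|`, which
takes the value `0` at the origin. -/
def unwind (Ψ : Pt → ℂ) (x : Pt) : ℂ :=
  starRingEnd ℂ (radialVortex (fun t ↦ (√t)⁻¹) x) * Ψ x

/-- The expectation of `|x|⁻²`. -/
def inverseSecondMoment (Ψ : Pt → ℂ) : ℝ := ∫ x in B1, ‖Ψ x‖ ^ 2 / ‖x‖ ^ 2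

section

variable {Ψ : Pt → ℂ} {x : Pt}

lemma norm_unwind (h0 : Ψ 0 = 0) (x : Pt) : ‖unwind Ψ x‖ = ‖Ψ x‖ := by
  rcases eq_or_ne x 0 with rfl | hx
  · simp [unwind, h0]
  · rw [unwind, norm_mul, Complex.norm_conj, radialVortex, norm_smul, toC.norm_map,
      sqrt_sq (norm_nonneg x), norm_inv, norm_norm, inv_mul_cancel₀ (norm_ne_zero_iff.2 hx),
      one_mul]

lemma differentiableAt_conj_radialVortex_inv_sqrt (hx : x ≠ 0) :
    DifferentiableAt ℝ (fun y ↦ starRingEnd ℂ (radialVortex (fun t ↦ (√t)⁻¹) y)) x :=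
  Complex.conjCLE.differentiableAt.comp x (hasFDerivAt_radialVortex
    (hasDerivAt_inv_sqrt (pow_pos (norm_pos_iff.2 hx) 2))).differentiableAt

lemma hasFDerivAt_unwind_zero (h0 : Ψ 0 = 0) (h : HasFDerivAt Ψ (0 : Pt →L[ℝ] ℂ) 0) :
    HasFDerivAt (unwind Ψ) (0 : Pt →L[ℝ] ℂ) 0 := by
  rw [hasFDerivAt_iff_isLittleO_nhds_zero] at h ⊢
  refine Asymptotics.IsLittleO.of_norm_left (h.norm_left.congr_left fun y ↦ ?_)
  have hzero : unwind Ψ 0 = 0 := by simp [unwind, h0]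
  simp [h0, hzero, norm_unwind h0]

lemma kinDensity_unwind (hx : x ≠ 0) (hΨ : DifferentiableAt ℝ Ψ x) (Ω : ℝ) :
    kinDensity Ω (unwind Ψ) x = kinDensity Ω Ψ x + ‖Ψ x‖ ^ 2 / ‖x‖ ^ 2
      - 2 * (angDensity Ψ x / ‖x‖ ^ 2) + Ω * ‖Ψ x‖ ^ 2 := by
  have hx0 : 0 < ‖x‖ := norm_pos_iff.2 hx
  have hh := hasDerivAt_inv_sqrt (pow_pos hx0 2)
  have hcurrent : ∑ i, perp x i * (2 * (conjGrad i Ψ x).im - Ω * perp x i * ‖Ψ x‖ ^ 2)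
      = 2 * angDensity Ψ x - Ω * ‖x‖ ^ 2 * ‖Ψ x‖ ^ 2 := by
    rw [angDensity_eq_sum, ← sum_perp_sq, Fin.sum_univ_two, Fin.sum_univ_two, Fin.sum_univ_two]
    ring
  refine (kinDensity_mul (differentiableAt_conj_radialVortex_inv_sqrt hx) hΨ Ω).trans ?_
  simp only [conjGrad_conj, Complex.conj_re, Complex.conj_im, gradSq_conj, Complex.norm_conj,
    norm_radialVortex_sq, re_conjGrad_radialVortex hh, im_conjGrad_radialVortex hh,
    gradSq_radialVortex hh, neg_mul, mul_assoc, Finset.sum_neg_distrib, ← Finset.mul_sum]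
  simp only [← mul_assoc]
  rw [hcurrent, sqrt_sq hx0.le]
  field_simp
  ring

lemma angDensity_unwind (hx : x ≠ 0) (hΨ : DifferentiableAt ℝ Ψ x) :
    angDensity (unwind Ψ) x = angDensity Ψ x - ‖Ψ x‖ ^ 2 := by
  have h₀ := kinDensity_unwind hx hΨ 0
  have h₁ := kinDensity_unwind hx hΨ 1
  simp only [kinDensity] at h₀ h₁
  linarith

lemma ae_restrict_B1_ne_zero : ∀ᵐ x ∂volume.restrict B1, x ≠ 0 :=
  ae_restrict_of_ae (measure_eq_zero_iff_ae_notMem.1 (measure_singleton 0))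

end

namespace IsAngMomEigenfunction

variable {n : ℤ} {Ψ : Pt → ℂ} (hΨ : IsAngMomEigenfunction n Ψ)
include hΨ

lemma angMean_eq (h : gpAdm Ψ) : angMean Ψ = n := by
  rw [angMean, setIntegral_congr_fun measurableSet_B1 fun x hx ↦ hΨ.angDensity_eq hx,
    integral_const_mul, h.2.2.2.2.2, mul_one]

lemma one_le_inverseSecondMoment (h : gpAdm Ψ) (hn : n ≠ 0) : 1 ≤ inverseSecondMoment Ψ := by
  rw [← h.mass_eq_one]
  refine integral_mono_ae h.2.1 (hΨ.integrable_norm_sq_div h.finiteEnergy hn) ?_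
  filter_upwards [ae_restrict_mem measurableSet_B1, ae_restrict_B1_ne_zero] with x hx hx0
  have : 0 < ‖x‖ := norm_pos_iff.2 hx0
  rw [le_div_iff₀ (by positivity), mul_comm]
  exact norm_sq_mul_le hx (sq_nonneg _)

lemma ae_kinDensity_unwind (h : FiniteEnergy Ψ) (Ω : ℝ) : ∀ᵐ x ∂volume.restrict B1,
    kinDensity Ω (unwind Ψ) x
      = kinDensity Ω Ψ x - (2 * n - 1) * (‖Ψ x‖ ^ 2 / ‖x‖ ^ 2) + Ω * ‖Ψ x‖ ^ 2 := by
  filter_upwards [ae_restrict_mem measurableSet_B1, ae_restrict_B1_ne_zero] with x hx hx0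
  rw [kinDensity_unwind hx0 (h.differentiableAt hx), hΨ.angDensity_eq hx]
  ring

lemma angMean_unwind (h : gpAdm Ψ) : angMean (unwind Ψ) = n - 1 := by
  have hang : ∀ᵐ x ∂volume.restrict B1,
      angDensity (unwind Ψ) x = angDensity Ψ x - ‖Ψ x‖ ^ 2 := by
    filter_upwards [ae_restrict_mem measurableSet_B1, ae_restrict_B1_ne_zero] with x hx hx0
    exact angDensity_unwind hx0 (h.finiteEnergy.differentiableAt hx)
  rw [angMean, integral_congr_ae hang, integral_sub h.finiteEnergy.integrable_angDensity h.2.1,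
    h.2.2.2.2.2, ← hΨ.angMean_eq h, angMean]

variable (hn : 1 < |n|)
include hn

lemma differentiableOn_unwind (h : FiniteEnergy Ψ) : DifferentiableOn ℝ (unwind Ψ) B1 := by
  intro x hx
  refine DifferentiableAt.differentiableWithinAt ?_
  rcases eq_or_ne x 0 with rfl | hx0
  · have hn0 : n ≠ 0 := abs_pos.1 (zero_lt_one.trans hn)
    have hn2 : n ^ 2 ≠ 1 := (one_lt_sq_iff_one_lt_abs n).2 hn |>.ne'
    exact (hasFDerivAt_unwind_zero (hΨ.apply_zero hn0)
      (hΨ.hasFDerivAt_zero h.differentiableOn hn2)).differentiableAt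
  · exact (differentiableAt_conj_radialVortex_inv_sqrt hx0).mul (h.differentiableAt hx)

lemma norm_unwind (x : Pt) : ‖unwind Ψ x‖ = ‖Ψ x‖ :=
  _root_.norm_unwind (hΨ.apply_zero (abs_pos.1 (zero_lt_one.trans hn))) x

lemma finiteEnergy_unwind (h : FiniteEnergy Ψ) : FiniteEnergy (unwind Ψ) where
  differentiableOn := hΨ.differentiableOn_unwind hn h
  integrable_norm_sq := by simpa only [hΨ.norm_unwind hn] using h.integrable_norm_sq
  integrable_gradSq := by
    have hn0 : n ≠ 0 := abs_pos.1 (zero_lt_one.trans hn)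
    refine (h.integrable_gradSq.sub
      ((hΨ.integrable_norm_sq_div h hn0).const_mul (2 * n - 1))).congr ?_
    filter_upwards [hΨ.ae_kinDensity_unwind h 0] with x hx
    simpa [kinDensity] using hx.symm
  integrable_norm_pow_four := by simpa only [hΨ.norm_unwind hn] using h.integrable_norm_pow_four

lemma quartic_unwind : quartic (unwind Ψ) = quartic Ψ := by
  simp only [quartic, hΨ.norm_unwind hn]

lemma secondMoment_unwind : secondMoment (unwind Ψ) = secondMoment Ψ := by
  simp only [secondMoment, hΨ.norm_unwind hn]

lemma gpAdm_unwind (h : gpAdm Ψ) : gpAdm (unwind Ψ) := by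
  refine (hΨ.finiteEnergy_unwind hn h.finiteEnergy).gpAdm_of_mass_eq_one ?_
  simpa only [mass, hΨ.norm_unwind hn] using h.mass_eq_one

lemma gpEnergy_unwind (h : gpAdm Ψ) (ε Ω : ℝ) :
    gpEnergy ε Ω (unwind Ψ)
      = gpEnergy ε Ω Ψ - (2 * n - 1) * inverseSecondMoment Ψ + Ω := by
  have hfin := h.finiteEnergy
  have hkin := hfin.integrable_kinDensity Ω
  have hinv := (hΨ.integrable_norm_sq_div hfin (abs_pos.1 (zero_lt_one.trans hn))).const_mul
    (2 * n - 1 : ℝ)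
  have hsub : IntegrableOn
      (fun x ↦ kinDensity Ω Ψ x - (2 * n - 1) * (‖Ψ x‖ ^ 2 / ‖x‖ ^ 2)) B1 := hkin.sub hinv
  rw [(hΨ.finiteEnergy_unwind hn hfin).gpEnergy_eq, hfin.gpEnergy_eq, hΨ.quartic_unwind hn,
    kinEnergy, integral_congr_ae (hΨ.ae_kinDensity_unwind hfin Ω),
    integral_add hsub (h.2.1.const_mul Ω), integral_sub hkin hinv, integral_const_mul,
    integral_const_mul, h.2.2.2.2.2, kinEnergy, inverseSecondMoment]
  ring

end IsAngMomEigenfunction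

/-! ### Minimizers that are eigenfunctions -/

/-- The lower-order terms in the energy balance of trading one unit of winding at the origin for a
vortex at a random point. -/
def vortexCost (ε Ω : ℝ) (Ψ : Pt → ℂ) : ℝ :=
  2 * |log ε| + 9 + 2 * quartic Ψ + 3 * (Ω * ε)

section

variable {ε Ω : ℝ} {Φ Ψ : Pt → ℂ} {n : ℤ}

lemma nine_le_vortexCost (hΩε : 0 ≤ Ω * ε) (Ψ : Pt → ℂ) : 9 ≤ vortexCost ε Ω Ψ := by
  have := quartic_nonneg Ψ
  have := abs_nonneg (log ε)
  rw [vortexCost]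
  linarith

lemma mul_secondMoment_le (hε : 0 < ε) (h : gpAdm Φ) (hεΦ : ε * (quartic Φ + π) ≤ 1) (Ω : ℝ) :
    Ω * secondMoment Φ ≤ 2 * angMean Φ + 2 * (|log ε| + 4 + quartic Φ)
      + (1 + 3 * ε) * (gpEnergy ε Ω Φ - gpGround ε Ω) := by
  have hins := vortex_insertion hε h hεΦ ε Ω
  have hexc : 0 ≤ gpEnergy ε Ω Φ - gpGround ε Ω := sub_nonneg.2 (gpGround_le h ε Ω)
  have hε1 : ε ≤ 1 := (le_mul_of_one_le_right hε.le
    (by linarith [quartic_nonneg Φ, pi_gt_three])).trans hεΦ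
  have hfactor : π * (1 + ε) ^ 2 - massDefect ε ≤ π * (1 + 3 * ε) := by
    have := mul_le_mul_of_nonneg_left (mul_le_of_le_one_left hε.le hε1) pi_pos.le
    linarith [massDefect_nonneg hε]
  have hfactor := mul_le_mul_of_nonneg_right hfactor hexc
  have hcore : 2 * massDefect ε * (quartic Φ / ε ^ 2) ≤ 2 * (π * quartic Φ) := by
    rw [mul_assoc, mul_le_mul_iff_right₀ two_pos, ← mul_div_assoc, div_le_iff₀ (by positivity),
      mul_right_comm]
    exact mul_le_mul_of_nonneg_right (massDefect_le hε) (quartic_nonneg Φ)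
  refine le_of_mul_le_mul_left ?_ pi_pos
  linarith

namespace IsGPMinimizer

variable (h : IsGPMinimizer ε Ω Ψ) (hΨ : IsAngMomEigenfunction n Ψ)
include h hΨ

lemma mul_secondMoment_le (hε : 0 < ε) (hεΨ : ε * (quartic Ψ + π) ≤ 1) :
    Ω * secondMoment Ψ ≤ 2 * n + 2 * (|log ε| + 4 + quartic Ψ) := by
  have := _root_.mul_secondMoment_le hε h.1 hεΨ Ω
  rwa [h.2, sub_self, mul_zero, add_zero, hΨ.angMean_eq h.1] at this

/- The vortex is inserted into `unwind Ψ`, whose excess energy is at most `Ω`. -/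
lemma mul_inverseSecondMoment_le (hε : 0 < ε) (hΩ : 0 ≤ Ω) (hεΨ : ε * (quartic Ψ + π) ≤ 1)
    (hn : 1 < n) :
    (Ω * secondMoment Ψ - vortexCost ε Ω Ψ) * inverseSecondMoment Ψ ≤ Ω := by
  have hn' : 1 < |n| := hn.trans_le (le_abs_self n)
  have hn1 : (1 : ℝ) < n := by exact_mod_cast hn
  have hg := hΨ.one_le_inverseSecondMoment h.1 (zero_lt_one.trans hn).ne'
  have hwind := h.mul_secondMoment_le hΨ hε hεΨ
  have hunw := _root_.mul_secondMoment_le hε (hΨ.gpAdm_unwind hn' h.1)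
    (by rwa [hΨ.quartic_unwind hn']) Ω
  rw [hΨ.secondMoment_unwind hn', hΨ.angMean_unwind h.1, hΨ.quartic_unwind hn',
    hΨ.gpEnergy_unwind hn' h.1, h.2] at hunw
  have hexc : 0 ≤ (2 * n - 1) * inverseSecondMoment Ψ * ε :=
    mul_nonneg (mul_nonneg (by linarith) (by linarith)) hε.le
  have hΩε : 0 ≤ Ω * ε := mul_nonneg hΩ hε.le
  have hcost : Ω * secondMoment Ψ - vortexCost ε Ω Ψ ≤ 2 * n - 1 := by
    rw [vortexCost]
    linarith
  have := mul_le_mul_of_nonneg_right hcost (sub_nonneg.2 hg)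
  rw [vortexCost] at this ⊢
  linarith

lemma one_lt (hε : 0 < ε) (hΩ : 0 ≤ Ω) (hεΨ : ε * (quartic Ψ + π) ≤ 1)
    (hcost : 1 < Ω * secondMoment Ψ - vortexCost ε Ω Ψ) : 1 < n := by
  have hwind := h.mul_secondMoment_le hΨ hε hεΨ
  have hΩε : 0 ≤ Ω * ε := mul_nonneg hΩ hε.le
  rw [vortexCost] at hcost
  have : (1 : ℝ) < n := by linarith
  exact_mod_cast this

end IsGPMinimizer

end

/-! ### Slow rotation: the density is almost uniform -/

section

variable {ε Ω : ℝ} {Ψ : Pt → ℂ} {n : ℤ}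

lemma FiniteEnergy.integrable_density_sub_sq (h : FiniteEnergy Ψ) (c : ℝ) :
    IntegrableOn (fun x ↦ (‖Ψ x‖ ^ 2 - c) ^ 2) B1 := by
  refine ((h.integrable_norm_pow_four.sub (h.integrable_norm_sq.const_mul (2 * c))).add
    (integrableOn_B1_const (c ^ 2))).congr (.of_forall fun x ↦ ?_)
  simp only [Pi.add_apply, Pi.sub_apply]
  ring

lemma gpAdm.integral_density_sub_sq (h : gpAdm Ψ) :
    ∫ x in B1, (‖Ψ x‖ ^ 2 - 1 / π) ^ 2 = quartic Ψ - 1 / π := by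
  have hlin := h.2.1.const_mul (2 / π)
  have hsub : IntegrableOn (fun x ↦ ‖Ψ x‖ ^ 4 - 2 / π * ‖Ψ x‖ ^ 2) B1 := h.2.2.2.1.sub hlin
  calc ∫ x in B1, (‖Ψ x‖ ^ 2 - 1 / π) ^ 2
      = ∫ x in B1, (‖Ψ x‖ ^ 4 - 2 / π * ‖Ψ x‖ ^ 2 + 1 / π ^ 2) := by
        congr with x
        ring
    _ = quartic Ψ - 2 / π * mass Ψ + π * (1 / π ^ 2) := by
        rw [integral_add hsub (integrableOn_B1_const _), integral_sub h.2.2.2.1 hlin,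
          integral_const_mul, setIntegral_const, volume_real_B1, smul_eq_mul, quartic, mass]
    _ = quartic Ψ - 1 / π := by
        rw [h.mass_eq_one]
        field_simp
        ring

namespace IsGPMinimizer

lemma integral_abs_density_sub_le (h : IsGPMinimizer ε Ω Ψ) (hε : 0 < ε) (hΩ : 0 < Ω) :
    ∫ x in B1, |‖Ψ x‖ ^ 2 - 1 / π| ≤ Ω * ε := by
  set r := Ω * ε
  have hr : 0 < r := mul_pos hΩ hε
  have hsq := (h.1.finiteEnergy.integrable_density_sub_sq (1 / π)).const_mul (2 / r)
  calc ∫ x in B1, |‖Ψ x‖ ^ 2 - 1 / π|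
      ≤ ∫ x in B1, (2 / r * (‖Ψ x‖ ^ 2 - 1 / π) ^ 2 + r / 8) := by
        refine integral_mono (h.1.2.1.sub (integrableOn_B1_const _)).abs
          (hsq.add (integrableOn_B1_const _)) fun x ↦ ?_
        have := div_nonneg (sq_nonneg (4 * |‖Ψ x‖ ^ 2 - 1 / π| - r)) (by positivity : 0 ≤ 8 * r)
        rw [← sub_nonneg, ← sq_abs (‖Ψ x‖ ^ 2 - 1 / π)]
        refine this.trans_eq ?_
        field_simp
        ring
    _ = 2 / r * (quartic Ψ - 1 / π) + π * (r / 8) := by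
        rw [integral_add hsq (integrableOn_B1_const _), integral_const_mul,
          h.1.integral_density_sub_sq, setIntegral_const, volume_real_B1, smul_eq_mul]
    _ ≤ 2 / r * (r ^ 2 / 4) + 4 * (r / 8) := by
        gcongr
        · exact sub_le_iff_le_add'.2 (h.quartic_le hε)
        · exact pi_le_four
    _ = r := by
        field_simp
        ring

lemma le_integral_mul_density (h : IsGPMinimizer ε Ω Ψ) (hε : 0 < ε) (hΩ : 0 < Ω) {w : Pt → ℝ}
    (hw : Measurable w) {W : ℝ} (hW : ∀ x ∈ B1, |w x| ≤ W) :
    (∫ x in B1, w x) / π - W * (Ω * ε) ≤ ∫ x in B1, w x * ‖Ψ x‖ ^ 2 := by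
  have hW' : ∀ᵐ x ∂volume.restrict B1, ‖w x‖ ≤ W := by
    filter_upwards [ae_restrict_mem measurableSet_B1] with x hx using hW x hx
  have hint (u : Pt → ℝ) (hu : IntegrableOn u B1) : IntegrableOn (fun x ↦ w x * u x) B1 := by
    exact hu.bdd_mul hw.aestronglyMeasurable hW'
  have hW0 : 0 ≤ W := (abs_nonneg _).trans (hW 0 (Metric.mem_ball_self one_pos))
  have hd : IntegrableOn (fun x ↦ ‖Ψ x‖ ^ 2 - 1 / π) B1 := h.1.2.1.sub (integrableOn_B1_const _)
  have hdiff : ‖∫ x in B1, w x * (‖Ψ x‖ ^ 2 - 1 / π)‖ ≤ W * (Ω * ε) :=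
    calc ‖∫ x in B1, w x * (‖Ψ x‖ ^ 2 - 1 / π)‖
        ≤ ∫ x in B1, W * |‖Ψ x‖ ^ 2 - 1 / π| := by
          refine norm_integral_le_of_norm_le (hd.abs.const_mul W) ?_
          filter_upwards [hW'] with x hx
          rw [norm_mul]
          exact mul_le_mul_of_nonneg_right hx (norm_nonneg _)
      _ ≤ W * (Ω * ε) := by
          rw [integral_const_mul]
          exact mul_le_mul_of_nonneg_left (h.integral_abs_density_sub_le hε hΩ) hW0
  simp only [mul_sub] at hdiff
  rw [integral_sub (hint _ h.1.2.1) (hint _ (integrableOn_B1_const _)), integral_mul_const,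
    mul_one_div] at hdiff
  linarith [neg_le_of_abs_le hdiff]

lemma half_sub_le_secondMoment (h : IsGPMinimizer ε Ω Ψ) (hε : 0 < ε) (hΩ : 0 < Ω) :
    1 / 2 - Ω * ε ≤ secondMoment Ψ := by
  have hint : ∫ x in B1, ‖x‖ ^ 2 = π / 2 := by
    rw [B1, integral_ball_fun_norm (fun r ↦ r ^ 2) zero_le_one]
    simp only [← pow_succ', integral_pow]
    norm_num
    ring
  have hle := h.le_integral_mul_density hε hΩ (w := fun x ↦ ‖x‖ ^ 2) (by fun_prop) (W := 1)
    fun x hx ↦ by simpa using (norm_lt_one_of_mem_B1 hx).le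
  rwa [hint, div_right_comm, div_self pi_ne_zero, one_mul] at hle

lemma le_inverseSecondMoment (h : IsGPMinimizer ε Ω Ψ) (hΨ : IsAngMomEigenfunction n Ψ)
    (hn : n ≠ 0) (hε : 0 < ε) (hΩ : 0 < Ω) {s : ℝ} (hs : 0 < s) (hs1 : s ≤ 1) :
    1 + 2 * log (1 / s) - (s ^ 2)⁻¹ * (Ω * ε) ≤ inverseSecondMoment Ψ := by
  have hw := boundedMeasurable_max_norm_sq_inv hs
  have hle := h.le_integral_mul_density hε hΩ hw.measurable (W := (s ^ 2)⁻¹) fun x _ ↦ by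
    rw [abs_of_nonneg (by positivity)]
    gcongr
    exact le_max_right _ _
  rw [B1, integral_ball_max_norm_sq_inv hs hs1, ← B1, add_div, div_self pi_ne_zero,
    mul_div_right_comm, mul_div_cancel_right₀ _ pi_ne_zero] at hle
  have hint : IntegrableOn (fun x ↦ (max ‖x‖ s ^ 2)⁻¹ * ‖Ψ x‖ ^ 2) B1 := by
    simpa only [sub_zero] using hw.integrable_comp_sub_mul h.1.2.1 0
  refine hle.trans (integral_mono_ae hint (hΨ.integrable_norm_sq_div h.1.finiteEnergy hn) ?_)
  filter_upwards [ae_restrict_B1_ne_zero] with x hx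
  have := norm_pos_iff.2 hx
  rw [div_eq_inv_mul]
  gcongr
  exact le_max_left _ _

theorem not_isAngMomEigenfunction_of_slow (h : IsGPMinimizer ε Ω Ψ) (hε : 0 < ε)
    (hεΨ : ε * (quartic Ψ + π) ≤ 1) (hslow : Ω * ε ≤ exp (-8) / 100)
    (hcost : vortexCost ε Ω Ψ ≤ 0.35 * Ω) (hΩ : 0 < Ω) : ¬ IsAngMomEigenfunction n Ψ := by
  intro hΨ
  have hΩε : 0 ≤ Ω * ε := by positivity
  have hexp : exp (-8) ≤ 1 := exp_le_one_iff.2 (by norm_num)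
  have hm : 0.49 ≤ secondMoment Ψ :=
    le_trans (by norm_num at hslow ⊢; linarith) (h.half_sub_le_secondMoment hε hΩ)
  have hgain : 0.14 * Ω ≤ Ω * secondMoment Ψ - vortexCost ε Ω Ψ := by
    linarith [mul_le_mul_of_nonneg_left hm hΩ.le]
  have hn : 1 < n := by
    refine h.one_lt hΨ hε hΩ.le hεΨ ?_
    norm_num at hcost hgain
    linarith [nine_le_vortexCost hΩε Ψ]
  have hg : 8 ≤ inverseSecondMoment Ψ := by
    have hle := h.le_inverseSecondMoment hΨ (zero_lt_one.trans hn).ne' hε hΩ (exp_pos (-4))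
      (exp_le_one_iff.2 (by norm_num))
    have hinv : (exp (-4) ^ 2)⁻¹ * exp (-8) = 1 := by
      rw [← exp_nat_mul, ← exp_neg, ← exp_add]
      norm_num
    have := mul_le_mul_of_nonneg_left hslow (by positivity : 0 ≤ (exp (-4) ^ 2)⁻¹)
    rw [one_div, log_inv, log_exp] at hle
    linarith
  have hle := h.mul_inverseSecondMoment_le hΨ hε hΩ.le hεΨ hn
  have := mul_le_mul hgain hg (by norm_num) (le_trans (by positivity) hgain)
  norm_num at this
  linarith

end IsGPMinimizer

end

/-! ### Fast rotation: the density cannot concentrate on a circle -/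

/-- The variance of `|x|²`. -/
def radialVariance (Ψ : Pt → ℂ) : ℝ := ∫ x in B1, (‖x‖ ^ 2 - secondMoment Ψ) ^ 2 * ‖Ψ x‖ ^ 2

section

variable {ε Ω K : ℝ} {Ψ : Pt → ℂ} {n : ℤ}

lemma volume_real_annulus_le {m β : ℝ} (hm : 0 ≤ m) (hβ : 0 < β) :
    volume.real (B1 ∩ {x : Pt | |‖x‖ ^ 2 - m| < β}) ≤ 2 * π * β := by
  have hsub : B1 ∩ {x : Pt | |‖x‖ ^ 2 - m| < β}
      ⊆ Metric.ball 0 √(m + β) \ Metric.ball 0 √(max (m - β) 0) := by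
    intro x hx
    obtain ⟨hlow, hup⟩ := abs_lt.1 (Set.mem_ofPred.1 hx.2)
    simp only [Set.mem_sdiff, mem_ball_zero_iff, not_lt]
    exact ⟨lt_sqrt_of_sq_lt (by linarith),
      sqrt_le_iff.2 ⟨norm_nonneg _, max_le (by linarith) (sq_nonneg _)⟩⟩
  have hrad : √(max (m - β) 0) ≤ √(m + β) :=
    sqrt_le_sqrt (max_le (by linarith) (by linarith))
  calc volume.real (B1 ∩ {x : Pt | |‖x‖ ^ 2 - m| < β})
      ≤ volume.real (Metric.ball (0 : Pt) √(m + β) \ Metric.ball 0 √(max (m - β) 0)) :=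
        measureReal_mono hsub (ne_top_of_le_ne_top measure_ball_lt_top.ne
          (measure_mono Set.sdiff_subset))
    _ = π * (m + β) - π * max (m - β) 0 := by
        rw [measureReal_sdiff (Metric.ball_subset_ball hrad) measurableSet_ball
          measure_ball_lt_top.ne, volume_real_ball _ (sqrt_nonneg _),
          volume_real_ball _ (sqrt_nonneg _), sq_sqrt (by linarith), sq_sqrt (le_max_right _ _)]
    _ ≤ 2 * π * β := by
        linarith [mul_le_mul_of_nonneg_left (le_max_left (m - β) 0) pi_pos.le]

lemma FiniteEnergy.setIntegral_norm_sq_le (h : FiniteEnergy Ψ) (hK : 0 < K) (S : Set Pt) :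
    ∫ x in B1 ∩ S, ‖Ψ x‖ ^ 2 ≤ quartic Ψ / (4 * K) + K * volume.real (B1 ∩ S) := by
  have hquartic : IntegrableOn (fun x ↦ ‖Ψ x‖ ^ 4 / (4 * K)) B1 :=
    h.integrable_norm_pow_four.div_const _
  have hconst : IntegrableOn (fun _ : Pt ↦ K) (B1 ∩ S) :=
    (integrableOn_B1_const K).mono_set Set.inter_subset_left
  calc ∫ x in B1 ∩ S, ‖Ψ x‖ ^ 2
      ≤ ∫ x in B1 ∩ S, (‖Ψ x‖ ^ 4 / (4 * K) + K) := by
        refine integral_mono (h.integrable_norm_sq.mono_set Set.inter_subset_left)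
          ((hquartic.mono_set Set.inter_subset_left).add hconst) fun x ↦ ?_
        rw [div_add' _ _ _ (by positivity), le_div_iff₀ (by positivity)]
        linarith [sq_nonneg (‖Ψ x‖ ^ 2 - 2 * K)]
    _ = (∫ x in B1 ∩ S, ‖Ψ x‖ ^ 4 / (4 * K)) + K * volume.real (B1 ∩ S) := by
        rw [integral_add (hquartic.mono_set Set.inter_subset_left) hconst, setIntegral_const,
          smul_eq_mul, mul_comm K]
    _ ≤ quartic Ψ / (4 * K) + K * volume.real (B1 ∩ S) := by
        rw [quartic, ← integral_div]
        gcongr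
        · exact ae_of_all _ fun x ↦ by positivity
        · exact Set.inter_subset_left

namespace gpAdm

lemma secondMoment_le_one (h : gpAdm Ψ) : secondMoment Ψ ≤ 1 :=
  h.finiteEnergy.secondMoment_le_mass.trans_eq h.mass_eq_one

lemma integrable_radialVariance (h : gpAdm Ψ) :
    IntegrableOn (fun x ↦ (‖x‖ ^ 2 - secondMoment Ψ) ^ 2 * ‖Ψ x‖ ^ 2) B1 := by
  refine h.2.1.bdd_mul (c := 1) (by fun_prop) ?_
  filter_upwards [ae_restrict_mem measurableSet_B1] with x hx
  have h1 := h.secondMoment_le_one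
  have hx1 := pow_le_one₀ (n := 2) (norm_nonneg _) (norm_lt_one_of_mem_B1 hx).le
  rw [norm_pow, norm_eq_abs]
  exact pow_le_one₀ (abs_nonneg _) (abs_sub_le_of_nonneg_of_le (sq_nonneg _) hx1
    (secondMoment_nonneg Ψ) h1)

lemma radialVariance_le_secondMoment (h : gpAdm Ψ) : radialVariance Ψ ≤ secondMoment Ψ := by
  set m := secondMoment Ψ with hm
  have hlin := h.finiteEnergy.integrable_norm_sq_mul.const_mul (1 - 2 * m)
  have hconst := h.2.1.const_mul (m ^ 2)
  calc radialVariance Ψ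
      ≤ ∫ x in B1, ((1 - 2 * m) * (‖x‖ ^ 2 * ‖Ψ x‖ ^ 2) + m ^ 2 * ‖Ψ x‖ ^ 2) := by
        refine setIntegral_mono_on h.integrable_radialVariance (hlin.add hconst)
          measurableSet_B1 fun x hx ↦ ?_
        linarith [norm_sq_mul_le hx (by positivity : 0 ≤ ‖x‖ ^ 2 * ‖Ψ x‖ ^ 2)]
    _ = m - m ^ 2 := by
        rw [integral_add hlin hconst, integral_const_mul, integral_const_mul, h.2.2.2.2.2,
          ← secondMoment, ← hm]
        ring
    _ ≤ m := sub_le_self _ (sq_nonneg _)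

/- The annulus `||x|² - m| < β` with `β = 1 / (8πK)` carries at most half of the mass, and outside
of it the variance integrand is at least `β² |Ψ|²`. -/
lemma le_radialVariance (h : gpAdm Ψ) (hK : 0 < K) (hΨK : quartic Ψ ≤ K) :
    1 / (16 * π * K) ^ 2 ≤ radialVariance Ψ := by
  set m := secondMoment Ψ
  set β := 1 / (8 * π * K) with hβdef
  have hβ : 0 < β := by positivity
  set S := {x : Pt | |‖x‖ ^ 2 - m| < β}
  have hS : MeasurableSet S := measurableSet_lt (by fun_prop) measurable_const
  have hvol : K * volume.real (B1 ∩ S) ≤ 1 / 4 := by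
    calc K * volume.real (B1 ∩ S)
        ≤ K * (2 * π * β) := by
          gcongr
          exact volume_real_annulus_le (secondMoment_nonneg Ψ) hβ
      _ = 1 / 4 := by rw [hβdef]; field_simp; norm_num
  have hinside : ∫ x in B1 ∩ S, ‖Ψ x‖ ^ 2 ≤ 1 / 2 := by
    have : quartic Ψ / (4 * K) ≤ 1 / 4 := by
      rw [div_le_iff₀ (by positivity)]
      linarith
    linarith [h.finiteEnergy.setIntegral_norm_sq_le hK S]
  have houtside : 1 / 2 ≤ ∫ x in B1 \ S, ‖Ψ x‖ ^ 2 := by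
    linarith [integral_inter_add_sdiff hS h.2.1, h.2.2.2.2.2]
  calc 1 / (16 * π * K) ^ 2
      = β ^ 2 * (1 / 4) := by rw [hβdef]; field_simp; norm_num
    _ ≤ β ^ 2 * ∫ x in B1 \ S, ‖Ψ x‖ ^ 2 := by gcongr; linarith
    _ = ∫ x in B1 \ S, β ^ 2 * ‖Ψ x‖ ^ 2 := (integral_const_mul _ _).symm
    _ ≤ ∫ x in B1 \ S, (‖x‖ ^ 2 - m) ^ 2 * ‖Ψ x‖ ^ 2 := by
        refine setIntegral_mono_on ((h.2.1.mono_set Set.sdiff_subset).const_mul _)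
          (h.integrable_radialVariance.mono_set Set.sdiff_subset) (measurableSet_B1.diff hS)
          fun x hx ↦ ?_
        gcongr ?_ * _
        rw [← sq_abs (‖x‖ ^ 2 - m)]
        exact pow_le_pow_left₀ hβ.le (not_lt.1 hx.2) 2
    _ ≤ radialVariance Ψ :=
        setIntegral_mono_set h.integrable_radialVariance (ae_of_all _ fun x ↦ by positivity)
          Set.sdiff_subset.eventuallyLE

lemma secondMoment_add_radialVariance_le (h : gpAdm Ψ) (hΨ : IsAngMomEigenfunction n Ψ)
    (hn : n ≠ 0) :
    secondMoment Ψ + radialVariance Ψ ≤ secondMoment Ψ ^ 2 * inverseSecondMoment Ψ := by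
  set m := secondMoment Ψ with hm
  have hsub := h.finiteEnergy.integrable_norm_sq_mul
  have hlin : IntegrableOn (fun x ↦ 2 * m * ‖Ψ x‖ ^ 2 - ‖x‖ ^ 2 * ‖Ψ x‖ ^ 2) B1 :=
    (h.2.1.const_mul _).sub hsub
  calc m + radialVariance Ψ
      = ∫ x in B1, ((2 * m * ‖Ψ x‖ ^ 2 - ‖x‖ ^ 2 * ‖Ψ x‖ ^ 2)
          + (‖x‖ ^ 2 - m) ^ 2 * ‖Ψ x‖ ^ 2) := by
        rw [integral_add hlin h.integrable_radialVariance, integral_sub (h.2.1.const_mul _) hsub,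
          integral_const_mul, h.2.2.2.2.2, ← secondMoment, ← hm, radialVariance, ← hm]
        ring
    _ ≤ ∫ x in B1, m ^ 2 * (‖Ψ x‖ ^ 2 / ‖x‖ ^ 2) := by
        refine integral_mono_ae (hlin.add h.integrable_radialVariance)
          ((hΨ.integrable_norm_sq_div h.finiteEnergy hn).const_mul _) ?_
        filter_upwards [ae_restrict_mem measurableSet_B1, ae_restrict_B1_ne_zero] with x hx hx0
        rw [← mul_div_assoc, le_div_iff₀ (pow_pos (norm_pos_iff.2 hx0) 2)]
        linarith [norm_sq_mul_le hx (by positivity : 0 ≤ (‖x‖ ^ 2 - m) ^ 2 * ‖Ψ x‖ ^ 2)]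
    _ = m ^ 2 * inverseSecondMoment Ψ := by rw [integral_const_mul, inverseSecondMoment]

end gpAdm

theorem IsGPMinimizer.not_isAngMomEigenfunction_of_fast (h : IsGPMinimizer ε Ω Ψ) (hε : 0 < ε)
    (hεΨ : ε * (quartic Ψ + π) ≤ 1) (hK : 0 < K) (hΨK : quartic Ψ ≤ K)
    (hcost : vortexCost ε Ω Ψ ≤ Ω * ((1 / (16 * π * K) ^ 2) ^ 2 / 4)) (hΩ : 0 < Ω) :
    ¬ IsAngMomEigenfunction n Ψ := by
  intro hΨ
  have hV0 : 0 < 1 / (16 * π * K) ^ 2 := by positivity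
  have hVle := h.1.le_radialVariance hK hΨK
  set V := 1 / (16 * π * K) ^ 2
  set m := secondMoment Ψ
  have hVm : V ≤ m := hVle.trans h.1.radialVariance_le_secondMoment
  have hm : 0 < m := hV0.trans_le hVm
  have hm1 : m ≤ 1 := h.1.secondMoment_le_one
  have hcost' : vortexCost ε Ω Ψ ≤ Ω * m * (V / 4) := by
    refine hcost.trans ?_
    rw [sq, mul_div_assoc, ← mul_assoc]
    gcongr
  have h9 := nine_le_vortexCost (by positivity : 0 ≤ Ω * ε) Ψ
  have hgain : Ω * m * (1 - V / 4) ≤ Ω * m - vortexCost ε Ω Ψ := by linarith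
  have hn : 1 < n := by
    refine h.one_lt hΨ hε hΩ.le hεΨ (lt_of_lt_of_le ?_ hgain)
    have := mul_le_mul_of_nonneg_left (hVm.trans hm1) (mul_pos hΩ hm).le
    linarith
  have hn0 : n ≠ 0 := (zero_lt_one.trans hn).ne'
  have hspread : 1 + V ≤ m * inverseSecondMoment Ψ := by
    refine le_of_mul_le_mul_left ?_ hm
    have := mul_le_of_le_one_left hV0.le hm1
    linarith [h.1.secondMoment_add_radialVariance_le hΨ hn0]
  have hg := hΨ.one_le_inverseSecondMoment h.1 hn0
  refine (h.mul_inverseSecondMoment_le hΨ hε hΩ.le hεΨ hn).not_gt ?_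
  have hV1 : V ≤ 1 := hVm.trans hm1
  calc Ω < Ω * ((1 + V) * (1 - V / 4)) := by
        refine lt_mul_of_one_lt_right hΩ ?_
        linarith [mul_le_of_le_one_left hV0.le hV1]
    _ ≤ Ω * ((m * inverseSecondMoment Ψ) * (1 - V / 4)) := by
        gcongr
        linarith
    _ = Ω * m * (1 - V / 4) * inverseSecondMoment Ψ := by ring
    _ ≤ (Ω * m - vortexCost ε Ω Ψ) * inverseSecondMoment Ψ := by gcongr

end

/-! ### The threshold for `ε` -/

lemma eventually_small_parameter {A K δ : ℝ} (hδ : 0 < δ) :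
    ∀ᶠ ε in nhdsWithin (0 : ℝ) (Set.Ioi 0),
      ε * K ≤ 1 ∧ A ≤ |log ε| ∧ (2 * |log ε| + A) * ε ≤ δ := by
  have hid : Tendsto (fun ε : ℝ ↦ ε) (nhdsWithin 0 (Set.Ioi 0)) (nhds 0) :=
    tendsto_nhdsWithin_of_tendsto_nhds tendsto_id
  have hlog : Tendsto (fun ε : ℝ ↦ |log ε * ε|) (nhdsWithin 0 (Set.Ioi 0)) (nhds 0) := by
    simpa only [rpow_one, abs_zero] using (tendsto_log_mul_rpow_nhdsGT_zero zero_lt_one).abs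
  have hcost : Tendsto (fun ε : ℝ ↦ 2 * |log ε * ε| + ε * A) (nhdsWithin 0 (Set.Ioi 0))
      (nhds 0) := by
    simpa only [mul_zero, zero_mul, add_zero] using (hlog.const_mul 2).add (hid.mul_const A)
  have hmul : Tendsto (fun ε : ℝ ↦ ε * K) (nhdsWithin 0 (Set.Ioi 0)) (nhds 0) := by
    simpa only [zero_mul] using hid.mul_const K
  filter_upwards [self_mem_nhdsWithin, hmul.eventually_le_const one_pos,
    (tendsto_abs_atBot_atTop.comp tendsto_log_nhdsGT_zero).eventually_ge_atTop A,
    hcost.eventually_le_const hδ] with ε hε hεK hA hεA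
  refine ⟨hεK, hA, ?_⟩
  rw [abs_mul, abs_of_pos (a := ε) hε] at hεA
  linarith

theorem IsGPMinimizer.not_isAngMomEigenfunction {K ε Ω : ℝ} {Ψ : Pt → ℂ} {n : ℤ}
    (h : IsGPMinimizer ε Ω Ψ) (hε : 0 < ε) (hΩ : 0 < Ω) (hK : 0 < K) (hΨK : quartic Ψ ≤ K)
    (hεK : ε * (K + π) ≤ 1) (hcost : vortexCost ε Ω Ψ ≤ 0.35 * Ω)
    (hcostε : vortexCost ε Ω Ψ * ε ≤ exp (-8) / 100 * ((1 / (16 * π * K) ^ 2) ^ 2 / 4)) :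
    ¬ IsAngMomEigenfunction n Ψ := by
  have hεΨ : ε * (quartic Ψ + π) ≤ 1 := le_trans (by gcongr) hεK
  rcases le_total (Ω * ε) (exp (-8) / 100) with hslow | hfast
  · exact h.not_isAngMomEigenfunction_of_slow hε hεΨ hslow hcost hΩ
  · refine h.not_isAngMomEigenfunction_of_fast hε hεΨ hK hΨK ?_ hΩ
    refine le_of_mul_le_mul_right (hcostε.trans ?_) hε
    rw [mul_right_comm Ω]
    exact mul_le_mul_of_nonneg_right hfast (by positivity)

theorem stmt5 (C : ℝ) (hC : 0 < C) : ∃ ε₀ : ℝ, 0 < ε₀ ∧ ∀ ε : ℝ, 0 < ε → ε < ε₀ →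
    ∀ Ω : ℝ, 6 * |Real.log ε| + 3 < Ω → Ω ≤ C / ε →
    ¬ ∃ (Ψ : Pt → ℂ) (n : ℤ), IsGPMinimizer ε Ω Ψ ∧
      ∀ x ∈ B1, angMom Ψ x = (n : ℂ) * Ψ x := by
  set K := 1 / π + C ^ 2 / 4
  have hK : 0 < K := by positivity
  obtain ⟨ε₀, hε₀, hsub⟩ := mem_nhdsGT_iff_exists_Ioo_subset.1
    (eventually_small_parameter (A := 10 * (9 + 2 * K + 3 * C)) (K := K + π)
      (δ := exp (-8) / 100 * ((1 / (16 * π * K) ^ 2) ^ 2 / 4)) (by positivity))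
  refine ⟨ε₀, hε₀, fun ε hε hε' Ω hΩ hΩC ⟨Ψ, n, hΨ, hn⟩ ↦ ?_⟩
  obtain ⟨hεK, hlog, hsmall⟩ := hsub ⟨hε, hε'⟩
  have hΩpos : 0 < Ω := by linarith [abs_nonneg (log ε)]
  have hΩε : Ω * ε ≤ C := (le_div_iff₀ hε).1 hΩC
  have hΨK : quartic Ψ ≤ K := (hΨ.quartic_le hε).trans (by unfold K; gcongr)
  have hcost : vortexCost ε Ω Ψ ≤ 2 * |log ε| + (9 + 2 * K + 3 * C) := by
    rw [vortexCost]
    linarith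
  refine hΨ.not_isAngMomEigenfunction hε hΩpos hK hΨK hεK (by norm_num; linarith) ?_ hn
  refine le_trans ?_ hsmall
  gcongr
  linarith
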